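/- arXiv:1512.02614 — 2 statements merged into one kernel-verified Lean document; each statement's English description precedes it below -/
import Mathlib

section
/- For |α| ≤ 1/2, the supremum over x > 0 of x·(J_α(x)² + Y_α(x)²) equals 2/π; in particular sup_{x>0} 2x|J_α(x)Y_α(x)| ≤ 2/π. -/
open Real MeasureTheory

/-- Bessel function of the first kind of real order `α`, defined by its power series
(with `rpow` powers, intended for `x > 0`). -/
noncomputable def besselJ (α x : ℝ) : ℝ :=
  ∑' k : ℕ, ((-1 : ℝ) ^ k / (k.factorial * Real.Gamma (k + α + 1))) * (x / 2) ^ (2 * (k : ℝ) + α)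

/-- Bessel function of the second kind of real order `α`, defined by Schläfli's integral
representation (valid for `x > 0`). -/
noncomputable def besselY (α x : ℝ) : ℝ :=
  (1 / π) * (∫ θ in (0 : ℝ)..π, Real.sin (x * Real.sin θ - α * θ)) -
    (1 / π) * ∫ t in Set.Ioi (0 : ℝ),
      (Real.exp (α * t) + Real.exp (-α * t) * Real.cos (α * π)) * Real.exp (-x * Real.sinh t)

open Filter Topology
open Complex (I)
open scoped ComplexConjugate

/-!
Nicholson's formula, after the substitution `v = 2 x sinh p`, reads
`x (J_α(x)² + Y_α(x)²) = (4 / π²) ∫₀^∞ w(v / 2x) K₀(v) dv`, where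
`w(sinh p) = cosh (2 α p) / cosh p`. For `|α| ≤ 1/2` the weight satisfies `0 < w ≤ 1`, and
`w(v / 2x) → w(0) = 1` as `x → ∞`; since `∫₀^∞ K₀ = π / 2`, the left-hand side is at most `2 / π`
and tends to it.

Nicholson's formula itself is a boundary value. For `Re z > 0`, writing `|K_α(z)|²` as a double
integral and rotating coordinates gives `2 ∫₀^∞ cosh (2 α p) K₀(|z eᵖ + z̄ e⁻ᵖ|) dp`. Let
`z = ε - i x` with `ε → 0⁺`: the argument of `K₀` tends to `2 x sinh p`, while a contour shift
by `± i π / 2` in the integral for `K_α(z)` shows that `K_α(z)` tends to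
`(i π / 2) exp(i α π / 2) (J_α(x) + i Y_α(x))`, with `J_α` given by Schläfli's integral. That
integral is the power series of `J_α` summed under Hankel's contour integral for `1 / Γ`.
-/

section ContourShift

variable {E : Type*} [NormedAddCommGroup E]

theorem integrableOn_Ioi_of_norm_le_exp {f : ℝ → E} (hf : Continuous f) {C c : ℝ} (hc : 0 < c)
    (hfC : ∀ t, 0 ≤ t → ‖f t‖ ≤ C * exp (-c * t)) : IntegrableOn f (Set.Ioi 0) := by
  refine Integrable.mono' ((exp_neg_integrableOn_Ioi 0 hc).const_mul C)
    hf.aestronglyMeasurable ?_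
  filter_upwards [ae_restrict_mem measurableSet_Ioi] with t ht
  exact hfC t (le_of_lt ht)

theorem integrable_of_integrableOn_Ioi_of_comp_neg {f : ℝ → E}
    (hf : IntegrableOn f (Set.Ioi 0)) (hf_neg : IntegrableOn (fun t => f (-t)) (Set.Ioi 0)) :
    Integrable f := by
  rw [← integrableOn_univ, ← Set.Iic_union_Ioi (a := (0 : ℝ)), integrableOn_union,
    integrableOn_Iic_iff_integrableOn_Iio]
  rw [← neg_zero] at hf_neg
  exact ⟨by simpa only [neg_neg] using hf_neg.comp_neg_Iio, hf⟩

theorem integral_eq_integral_Ioi_add_integral_Ioi_comp_neg [NormedSpace ℝ E] {f : ℝ → E}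
    (hf : Integrable f) :
    ∫ t, f t = (∫ t in Set.Ioi 0, f t) + ∫ t in Set.Ioi 0, f (-t) := by
  rw [integral_comp_neg_Ioi, neg_zero, add_comm]
  exact (intervalIntegral.integral_Iic_add_Ioi hf.integrableOn hf.integrableOn).symm

/-- Uniform exponential decay of `f` on the half-strip `{w | 0 ≤ Re w, Im w ∈ [a, b]}`, the
growth condition under which the contour `[0, ∞)` may be moved vertically inside that half-strip.
The endpoints are unordered. -/
def HasExpDecayOnHalfStrip (f : ℂ → ℂ) (a b : ℝ) : Prop :=
  ∃ C c : ℝ, 0 < c ∧ ∀ t : ℝ, 0 ≤ t → ∀ θ ∈ Set.uIcc a b, ‖f (t + θ * I)‖ ≤ C * exp (-c * t)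

namespace HasExpDecayOnHalfStrip

variable {f : ℂ → ℂ} {a b : ℝ}

theorem integrableOn_Ioi (hdecay : HasExpDecayOnHalfStrip f a b) (hf : Continuous f) {θ : ℝ}
    (hθ : θ ∈ Set.uIcc a b) : IntegrableOn (fun t : ℝ => f (t + θ * I)) (Set.Ioi 0) := by
  obtain ⟨C, c, hc, hfC⟩ := hdecay
  exact integrableOn_Ioi_of_norm_le_exp (by fun_prop) hc fun t ht => hfC t ht θ hθ

theorem tendsto_intervalIntegral (hdecay : HasExpDecayOnHalfStrip f a b) :
    Tendsto (fun T : ℝ => ∫ θ in a..b, f (T + θ * I)) atTop (𝓝 0) := by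
  obtain ⟨C, c, hc, hfC⟩ := hdecay
  have exp_tendsto : Tendsto (fun T : ℝ => exp (-c * T)) atTop (𝓝 0) :=
    tendsto_exp_atBot.comp (tendsto_id.const_mul_atTop_of_neg (neg_lt_zero.mpr hc))
  refine squeeze_zero_norm' (a := fun T => C * exp (-c * T) * |b - a|) ?_
    (by simpa using (exp_tendsto.const_mul C).mul_const |b - a|)
  filter_upwards [eventually_ge_atTop 0] with T hT
  exact intervalIntegral.norm_integral_le_of_norm_le_const fun θ hθ =>
    hfC T hT θ (Set.uIoc_subset_uIcc hθ)

theorem integral_Ioi_sub_integral_Ioi (hdecay : HasExpDecayOnHalfStrip f a b)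
    (hf : Differentiable ℂ f) :
    (∫ t in Set.Ioi (0 : ℝ), f (t + a * I)) - ∫ t in Set.Ioi (0 : ℝ), f (t + b * I) =
      I * ∫ θ in a..b, f (θ * I) := by
  have cauchy (T : ℝ) :
      (∫ t in (0 : ℝ)..T, f (t + a * I)) - (∫ t in (0 : ℝ)..T, f (t + b * I)) +
        I * (∫ θ in a..b, f (T + θ * I)) = I * ∫ θ in a..b, f (θ * I) := by
    simpa [sub_eq_zero] using Complex.integral_boundary_rect_eq_zero_of_differentiableOn f
      (a * I) (T + b * I) hf.differentiableOn
  have lower := intervalIntegral_tendsto_integral_Ioi 0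
    (hdecay.integrableOn_Ioi hf.continuous Set.left_mem_uIcc) tendsto_id
  have upper := intervalIntegral_tendsto_integral_Ioi 0
    (hdecay.integrableOn_Ioi hf.continuous Set.right_mem_uIcc) tendsto_id
  have limit := ((lower.sub upper).add (hdecay.tendsto_intervalIntegral.const_mul I)).congr cauchy
  simpa using tendsto_nhds_unique limit tendsto_const_nhds

theorem integrable (hright : HasExpDecayOnHalfStrip f 0 b)
    (hleft : HasExpDecayOnHalfStrip (fun w => f (-w)) 0 (-b)) (hf : Continuous f) :
    Integrable fun t : ℝ => f (t + b * I) := by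
  refine integrable_of_integrableOn_Ioi_of_comp_neg
    (hright.integrableOn_Ioi hf Set.right_mem_uIcc) ?_
  simpa [neg_add_rev, add_comm] using hleft.integrableOn_Ioi (by fun_prop) Set.right_mem_uIcc

theorem integral_eq (hright : HasExpDecayOnHalfStrip f 0 b)
    (hleft : HasExpDecayOnHalfStrip (fun w => f (-w)) 0 (-a)) (hf : Differentiable ℂ f) :
    ∫ t : ℝ, f t = (∫ t in Set.Ioi (0 : ℝ), f (t + b * I)) +
      (∫ t in Set.Ioi (0 : ℝ), f (-t + a * I)) + I * ∫ θ in a..b, f (θ * I) := by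
  have right_shift := hright.integral_Ioi_sub_integral_Ioi hf
  have left_shift := hleft.integral_Ioi_sub_integral_Ioi (hf.comp differentiable_neg)
  have segment : ∫ θ in (0 : ℝ)..(-a), f (-(θ * I)) = ∫ θ in a..0, f (θ * I) := by
    simpa using intervalIntegral.integral_comp_neg (a := 0) (b := -a) fun θ : ℝ => f (θ * I)
  have hint : Integrable fun t : ℝ => f t := by
    refine integrable_of_integrableOn_Ioi_of_comp_neg ?_ ?_
    · simpa using hright.integrableOn_Ioi hf.continuous Set.left_mem_uIcc
    · simpa using
        hleft.integrableOn_Ioi (hf.continuous.comp continuous_neg) Set.left_mem_uIcc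
  have hcont : Continuous fun θ : ℝ => f (θ * I) := by have := hf.continuous; fun_prop
  rw [integral_eq_integral_Ioi_add_integral_Ioi_comp_neg hint,
    ← intervalIntegral.integral_add_adjacent_intervals (hcont.intervalIntegrable a 0)
      (hcont.intervalIntegrable 0 b)]
  rw [segment] at left_shift
  simp only [Complex.ofReal_zero, Complex.ofReal_neg, zero_mul, add_zero, neg_mul, neg_add,
    neg_neg] at right_shift left_shift ⊢
  linear_combination right_shift + left_shift

theorem integral_add_mul_I (hright : HasExpDecayOnHalfStrip f 0 b)
    (hleft : HasExpDecayOnHalfStrip (fun w => f (-w)) 0 (-b)) (hf : Differentiable ℂ f) :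
    ∫ t : ℝ, f (t + b * I) = ∫ t : ℝ, f t := by
  rw [hright.integral_eq hleft hf, integral_eq_integral_Ioi_add_integral_Ioi_comp_neg
    (hright.integrable hleft hf.continuous)]
  simp

end HasExpDecayOnHalfStrip

end ContourShift

section HyperbolicIntegrals

theorem exists_exp_neg_mul_sinh_sub_le {c : ℝ} (hc : 0 < c) (β : ℝ) :
    ∃ C, ∀ t, 0 ≤ t → exp (-(c * sinh t) - β * t) ≤ C * exp (-1 * t) := by
  refine ⟨exp ((1 - β) ^ 2 / c), fun t ht => ?_⟩
  have quadratic_le_sinh : t ^ 2 / 4 ≤ sinh t := by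
    have exp_neg_le_one : exp (-t) ≤ 1 := by simpa using ht
    rw [sinh_eq]
    linarith [quadratic_le_exp_of_nonneg ht]
  have linear_le_quadratic : (1 - β) * t ≤ c * (t ^ 2 / 4) + (1 - β) ^ 2 / c := by
    have : c * (t ^ 2 / 4) + (1 - β) ^ 2 / c - (1 - β) * t = (c * t / 2 - (1 - β)) ^ 2 / c := by
      field_simp
      ring
    linarith [div_nonneg (sq_nonneg (c * t / 2 - (1 - β))) hc.le]
  rw [← exp_add]
  gcongr
  linarith [mul_le_mul_of_nonneg_left quadratic_le_sinh hc.le]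

theorem norm_exp_neg_mul_cosh (z : ℂ) (β t θ : ℝ) :
    ‖Complex.exp (-z * Complex.cosh (t + θ * I) - β * (t + θ * I))‖ =
      exp (-(z.re * cosh t * cos θ - z.im * sinh t * sin θ) - β * t) := by
  rw [Complex.norm_exp, Complex.cosh_add, Complex.cosh_mul_I, Complex.sinh_mul_I,
    ← Complex.ofReal_cosh, ← Complex.ofReal_sinh, ← Complex.ofReal_cos, ← Complex.ofReal_sin]
  congr 1
  simp [-Complex.ofReal_cosh, -Complex.ofReal_sinh, -Complex.ofReal_cos, -Complex.ofReal_sin]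
  ring

theorem hasExpDecayOnHalfStrip_exp_neg_mul_cosh {z : ℂ} {a b c : ℝ} (hc : 0 < c)
    (hcos : ∀ θ ∈ Set.uIcc a b, 0 ≤ z.re * cos θ)
    (hre : ∀ θ ∈ Set.uIcc a b, c ≤ z.re * cos θ - z.im * sin θ) (β : ℝ) :
    HasExpDecayOnHalfStrip (fun w => Complex.exp (-z * Complex.cosh w - β * w)) a b := by
  obtain ⟨C, hC⟩ := exists_exp_neg_mul_sinh_sub_le hc β
  refine ⟨C, 1, one_pos, fun t ht θ hθ => ?_⟩
  rw [norm_exp_neg_mul_cosh]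
  refine le_trans (exp_le_exp.2 ?_) (hC t ht)
  have sinh_bound := mul_le_mul_of_nonneg_right (hre θ hθ) (sinh_nonneg_iff.2 ht)
  have cosh_bound := mul_le_mul_of_nonneg_left (sinh_lt_cosh t).le (hcos θ hθ)
  linarith

theorem integrable_exp_neg_mul_cosh {z : ℂ} (hz : 0 < z.re) (β : ℝ) :
    Integrable fun t : ℝ => Complex.exp (-z * Complex.cosh t - β * t) := by
  have decay (γ : ℝ) :
      HasExpDecayOnHalfStrip (fun w => Complex.exp (-z * Complex.cosh w - γ * w)) 0 0 :=
    hasExpDecayOnHalfStrip_exp_neg_mul_cosh hz (by simpa using hz.le) (by simp) γ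
  simpa using (decay β).integrable (by simpa using decay (-β)) (by fun_prop)

theorem integrable_exp_neg_mul_real_cosh {r : ℝ} (hr : 0 < r) :
    Integrable fun t : ℝ => exp (-r * cosh t) := by
  simpa [Complex.norm_exp] using (integrable_exp_neg_mul_cosh (z := r) (by simpa using hr) 0).norm

theorem hasDerivAt_arctan_sinh (t : ℝ) : HasDerivAt (fun t => arctan (sinh t)) (cosh t)⁻¹ t := by
  convert (hasDerivAt_sinh t).arctan using 1
  rw [← cosh_sq']
  field_simp

theorem tendsto_arctan_sinh_atTop : Tendsto (fun t => arctan (sinh t)) atTop (𝓝 (π / 2)) := by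
  have sinh_atTop : Tendsto sinh atTop atTop :=
    tendsto_atTop_mono' atTop ((eventually_ge_atTop 0).mono fun t => self_le_sinh_iff.2) tendsto_id
  exact (tendsto_nhds_of_tendsto_nhdsWithin tendsto_arctan_atTop).comp sinh_atTop

theorem integrableOn_Ioi_inv_cosh : IntegrableOn (fun t => (cosh t)⁻¹) (Set.Ioi 0) :=
  integrableOn_Ioi_deriv_of_nonneg' (fun t _ => hasDerivAt_arctan_sinh t)
    (fun t _ => inv_nonneg.2 (cosh_pos t).le) tendsto_arctan_sinh_atTop

theorem integral_Ioi_inv_cosh : ∫ t in Set.Ioi 0, (cosh t)⁻¹ = π / 2 := by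
  simpa using integral_Ioi_of_hasDerivAt_of_nonneg' (a := 0)
    (fun t _ => hasDerivAt_arctan_sinh t) (fun t _ => inv_nonneg.2 (cosh_pos t).le)
    tendsto_arctan_sinh_atTop

end HyperbolicIntegrals

section MacdonaldFunction

/-- The Macdonald function `K_α` of real order at a complex argument of positive real part, given
by its integral over the whole line. -/
noncomputable def besselK (α : ℝ) (z : ℂ) : ℂ :=
  (∫ t : ℝ, Complex.exp (-z * Complex.cosh t - α * t)) / 2

/-- The Macdonald function `K₀` on the positive half-line, as a real function. -/
noncomputable def besselKZero (r : ℝ) : ℝ :=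
  ∫ t in Set.Ioi (0 : ℝ), exp (-r * cosh t)

theorem integral_exp_neg_mul_cosh (r : ℝ) : ∫ t : ℝ, exp (-r * cosh t) = 2 * besselKZero r := by
  simpa [besselKZero] using integral_comp_abs (f := fun t => exp (-r * cosh t))

theorem besselKZero_nonneg (r : ℝ) : 0 ≤ besselKZero r :=
  integral_nonneg fun _ => (exp_pos _).le

theorem antitoneOn_besselKZero : AntitoneOn besselKZero (Set.Ioi 0) := by
  intro r hr s hs hrs
  refine integral_mono (integrable_exp_neg_mul_real_cosh hs).integrableOn
    (integrable_exp_neg_mul_real_cosh hr).integrableOn fun t => ?_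
  dsimp only
  gcongr

theorem continuousAt_besselKZero {r : ℝ} (hr : 0 < r) : ContinuousAt besselKZero r := by
  refine continuousAt_of_dominated (bound := fun t => exp (-(r / 2) * cosh t))
    (.of_forall fun s => by fun_prop) ?_
    (integrable_exp_neg_mul_real_cosh (half_pos hr)).integrableOn (.of_forall fun t => by fun_prop)
  filter_upwards [eventually_gt_nhds (half_lt_self hr)] with s hs
  refine .of_forall fun t => ?_
  rw [norm_of_nonneg (exp_pos _).le]
  gcongr

theorem integral_Ioi_exp_neg_mul_cosh (t : ℝ) :
    ∫ v in Set.Ioi (0 : ℝ), exp (-v * cosh t) = (cosh t)⁻¹ := by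
  simpa [mul_comm, neg_div] using integral_exp_mul_Ioi (neg_lt_zero.2 (cosh_pos t)) 0

theorem integrable_prod_exp_neg_mul_cosh :
    Integrable (fun y : ℝ × ℝ => exp (-y.1 * cosh y.2))
      ((volume.restrict (Set.Ioi 0)).prod (volume.restrict (Set.Ioi 0))) := by
  rw [integrable_prod_iff' (Continuous.aestronglyMeasurable (by fun_prop))]
  refine ⟨.of_forall fun t => ?_, ?_⟩
  · simpa only [IntegrableOn, neg_mul, mul_neg, mul_comm] using
      exp_neg_integrableOn_Ioi 0 (cosh_pos t)
  · simpa only [norm_of_nonneg (exp_pos _).le, integral_Ioi_exp_neg_mul_cosh]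
      using! integrableOn_Ioi_inv_cosh

theorem integrableOn_besselKZero : IntegrableOn besselKZero (Set.Ioi 0) :=
  integrable_prod_exp_neg_mul_cosh.integral_prod_left

theorem integral_besselKZero : ∫ v in Set.Ioi 0, besselKZero v = π / 2 := by
  simp only [besselKZero]
  rw [integral_integral_swap integrable_prod_exp_neg_mul_cosh]
  simpa only [integral_Ioi_exp_neg_mul_cosh] using integral_Ioi_inv_cosh

theorem besselK_conj (α : ℝ) (z : ℂ) : besselK α (conj z) = conj (besselK α z) := by
  simp only [besselK, map_div₀, ← integral_conj, ← Complex.exp_conj, map_sub, map_mul, map_neg,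
    ← Complex.cosh_conj, Complex.conj_ofReal, Complex.conj_ofNat]

end MacdonaldFunction

section ProductFormula

theorem integral_exp_neg_mul_exp_add_conj_mul_exp_neg {ζ : ℂ} (hζ : 0 < ζ.re) :
    ∫ q : ℝ, Complex.exp (-(ζ * Complex.exp q + conj ζ * Complex.exp (-q)) / 2) =
      2 * besselKZero ‖ζ‖ := by
  set f : ℂ → ℂ := fun w => Complex.exp (-‖ζ‖ * Complex.cosh w - (0 : ℝ) * w) with hf
  have arg_lt : |ζ.arg| < π / 2 := Complex.abs_arg_lt_pi_div_two_iff.2 (.inl hζ)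
  have re_le_norm_mul_cos {h θ : ℝ} (hh : |h| = |ζ.arg|) (hθ : θ ∈ Set.uIcc 0 h) :
      ζ.re ≤ ‖ζ‖ * cos θ := by
    have hθ_le : |θ| ≤ |ζ.arg| := by simpa [← hh] using Set.abs_sub_left_of_mem_uIcc hθ
    rw [← Complex.norm_mul_cos_arg, ← cos_abs ζ.arg, ← cos_abs θ]
    gcongr
    exact cos_le_cos_of_nonneg_of_le_pi (abs_nonneg _) (by linarith [pi_pos]) hθ_le
  have decay {h : ℝ} (hh : |h| = |ζ.arg|) : HasExpDecayOnHalfStrip f 0 h :=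
    hasExpDecayOnHalfStrip_exp_neg_mul_cosh (z := ‖ζ‖) hζ
      (fun θ hθ => by simpa using hζ.le.trans (re_le_norm_mul_cos hh hθ))
      (fun θ hθ => by simpa using re_le_norm_mul_cos hh hθ) 0
  have shifted (q : ℝ) : f (q + ζ.arg * I) =
      Complex.exp (-(ζ * Complex.exp q + conj ζ * Complex.exp (-q)) / 2) := by
    have polar := Complex.norm_mul_exp_arg_mul_I ζ
    have polar_conj : ‖ζ‖ * Complex.exp (-(ζ.arg * I)) = conj ζ := by
      simpa only [map_mul, ← Complex.exp_conj, Complex.conj_ofReal, Complex.conj_I, mul_neg]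
        using congrArg conj polar
    simp only [hf, Complex.cosh, neg_add, Complex.exp_add]
    congr 1
    simp only [Complex.ofReal_zero, zero_mul, sub_zero]
    linear_combination -(Complex.exp q / 2) * polar - Complex.exp (-q) / 2 * polar_conj
  have hshift := (decay rfl).integral_add_mul_I
    (by simpa [hf] using! decay (abs_neg ζ.arg)) (by fun_prop)
  simp only [shifted] at hshift
  rw [hshift, ← Complex.ofReal_ofNat, ← Complex.ofReal_mul, ← integral_exp_neg_mul_cosh,
    ← integral_complex_ofReal]
  simp [hf]

theorem measurableEmbedding_add_sub :
    MeasurableEmbedding fun y : ℝ × ℝ => (y.1 + y.2, y.1 - y.2) := by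
  refine Continuous.measurableEmbedding (by fun_prop) fun y y' h => ?_
  rw [Prod.mk.injEq] at h
  ext <;> linarith [h.1, h.2]

theorem map_add_sub_volume :
    (volume : Measure (ℝ × ℝ)).map (fun y => (y.1 + y.2, y.1 - y.2)) =
      ENNReal.ofReal 2⁻¹ • volume := by
  set L : ℝ × ℝ →ₗ[ℝ] ℝ × ℝ :=
    (LinearMap.fst ℝ ℝ ℝ + LinearMap.snd ℝ ℝ ℝ).prod (LinearMap.fst ℝ ℝ ℝ - LinearMap.snd ℝ ℝ ℝ)
    with hL
  have det_L : LinearMap.det L = -2 := by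
    rw [← LinearMap.det_toMatrix (Module.Basis.finTwoProd ℝ), Matrix.det_fin_two]
    norm_num [LinearMap.toMatrix_apply, hL]
  have map_L := Measure.map_linearMap_addHaar_eq_smul_addHaar (volume : Measure (ℝ × ℝ)) (f := L)
    (by simp [det_L])
  rw [det_L, abs_inv, abs_neg, abs_two] at map_L
  exact map_L

variable {E : Type*} [NormedAddCommGroup E]

theorem integral_comp_add_sub [NormedSpace ℝ E] (g : ℝ × ℝ → E) :
    ∫ y : ℝ × ℝ, g (y.1 + y.2, y.1 - y.2) = (2⁻¹ : ℝ) • ∫ y, g y := by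
  rw [← measurableEmbedding_add_sub.integral_map g, map_add_sub_volume, integral_smul_measure]
  simp

theorem integrable_comp_add_sub {g : ℝ × ℝ → E} (hg : Integrable g) :
    Integrable fun y : ℝ × ℝ => g (y.1 + y.2, y.1 - y.2) := by
  refine measurableEmbedding_add_sub.integrable_map_iff.1 ?_
  rw [map_add_sub_volume]
  exact hg.smul_measure ENNReal.ofReal_ne_top

theorem exp_neg_mul_cosh_add_mul_exp_neg_conj_mul_cosh_sub (α : ℝ) (z : ℂ) (p q : ℝ) :
    Complex.exp (-z * Complex.cosh (p + q : ℝ) - α * (p + q : ℝ)) *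
        Complex.exp (-conj z * Complex.cosh (p - q : ℝ) - α * (p - q : ℝ)) =
      exp (-(2 * α) * p) *
        Complex.exp (-((z * exp p + conj z * exp (-p)) * Complex.exp q +
          conj (z * exp p + conj z * exp (-p)) * Complex.exp (-q)) / 2) := by
  push_cast
  simp only [← Complex.exp_add, Complex.cosh, map_add, map_mul, Complex.conj_conj,
    ← Complex.exp_conj, map_neg, Complex.conj_ofReal]
  congr 1
  simp only [neg_add, sub_eq_add_neg, neg_neg, Complex.exp_add]
  ring

theorem re_mul_exp_add_conj_mul_exp_neg (z : ℂ) (p : ℝ) :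
    (z * exp p + conj z * exp (-p)).re = 2 * z.re * cosh p := by
  rw [cosh_eq, Complex.add_re, Complex.re_mul_ofReal, Complex.re_mul_ofReal, Complex.conj_re]
  ring

theorem im_mul_exp_add_conj_mul_exp_neg (z : ℂ) (p : ℝ) :
    (z * exp p + conj z * exp (-p)).im = 2 * z.im * sinh p := by
  rw [sinh_eq, Complex.add_im, Complex.im_mul_ofReal, Complex.im_mul_ofReal, Complex.conj_im]
  ring

theorem integral_exp_neg_mul_cosh_add_mul_exp_neg_conj_mul_cosh_sub (α : ℝ) {z : ℂ}
    (hz : 0 < z.re) (p : ℝ) :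
    ∫ q : ℝ, Complex.exp (-z * Complex.cosh (p + q : ℝ) - α * (p + q : ℝ)) *
        Complex.exp (-conj z * Complex.cosh (p - q : ℝ) - α * (p - q : ℝ)) =
      (2 * (exp (-(2 * α) * p) * besselKZero ‖z * exp p + conj z * exp (-p)‖) : ℝ) := by
  have re_pos : 0 < (z * exp p + conj z * exp (-p)).re := by
    rw [re_mul_exp_add_conj_mul_exp_neg]
    positivity
  simp only [exp_neg_mul_cosh_add_mul_exp_neg_conj_mul_cosh_sub]
  rw [integral_const_mul, integral_exp_neg_mul_exp_add_conj_mul_exp_neg re_pos]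
  push_cast
  ring

theorem integrable_prod_exp_neg_mul_cosh_add_mul_exp_neg_conj_mul_cosh_sub (α : ℝ) {z : ℂ}
    (hz : 0 < z.re) :
    Integrable (fun y : ℝ × ℝ =>
      Complex.exp (-z * Complex.cosh (y.1 + y.2 : ℝ) - α * (y.1 + y.2 : ℝ)) *
        Complex.exp (-conj z * Complex.cosh (y.1 - y.2 : ℝ) - α * (y.1 - y.2 : ℝ)))
      (volume.prod volume) :=
  integrable_comp_add_sub ((integrable_exp_neg_mul_cosh hz α).mul_prod
    (integrable_exp_neg_mul_cosh (z := conj z) (by simpa using hz) α))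

theorem integrable_exp_mul_besselKZero_norm (α : ℝ) {z : ℂ} (hz : 0 < z.re) :
    Integrable fun p => exp (-(2 * α) * p) * besselKZero ‖z * exp p + conj z * exp (-p)‖ := by
  have hint :=
    (integrable_prod_exp_neg_mul_cosh_add_mul_exp_neg_conj_mul_cosh_sub α hz).integral_prod_left
  simp only [integral_exp_neg_mul_cosh_add_mul_exp_neg_conj_mul_cosh_sub α hz] at hint
  simpa only [RCLike.re_to_complex, Complex.ofReal_re, inv_mul_cancel_left₀ (two_ne_zero' ℝ)]
    using hint.re.const_mul (2⁻¹ : ℝ)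

theorem norm_besselK_sq (α : ℝ) {z : ℂ} (hz : 0 < z.re) :
    ‖besselK α z‖ ^ 2 =
      ∫ p, exp (-(2 * α) * p) * besselKZero ‖z * exp p + conj z * exp (-p)‖ := by
  have hint := integrable_prod_exp_neg_mul_cosh_add_mul_exp_neg_conj_mul_cosh_sub α hz
  have product : (∫ t : ℝ, Complex.exp (-z * Complex.cosh t - α * t)) *
      (∫ t : ℝ, Complex.exp (-conj z * Complex.cosh t - α * t)) =
      2 * ∫ p : ℝ, ∫ q : ℝ, Complex.exp (-z * Complex.cosh (p + q : ℝ) - α * (p + q : ℝ)) *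
        Complex.exp (-conj z * Complex.cosh (p - q : ℝ) - α * (p - q : ℝ)) := by
    rw [← integral_prod_mul, ← integral_prod _ hint, ← Measure.volume_eq_prod,
      integral_comp_add_sub fun y : ℝ × ℝ => Complex.exp (-z * Complex.cosh y.1 - α * y.1) *
        Complex.exp (-conj z * Complex.cosh y.2 - α * y.2)]
    simp
  have complex_eq : (‖besselK α z‖ ^ 2 : ℂ) =
      (∫ p, exp (-(2 * α) * p) * besselKZero ‖z * exp p + conj z * exp (-p)‖ : ℝ) := by
    rw [← Complex.mul_conj', ← besselK_conj, besselK, besselK, div_mul_div_comm, product]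
    simp only [integral_exp_neg_mul_cosh_add_mul_exp_neg_conj_mul_cosh_sub α hz]
    rw [integral_complex_ofReal, integral_const_mul]
    push_cast
    ring
  exact_mod_cast complex_eq

theorem norm_besselK_sq_eq_integral_Ioi (α : ℝ) {z : ℂ} (hz : 0 < z.re) :
    ‖besselK α z‖ ^ 2 = 2 * ∫ p in Set.Ioi 0,
      cosh (2 * α * p) * besselKZero ‖z * exp p + conj z * exp (-p)‖ := by
  have norm_neg (p : ℝ) :
      ‖z * exp (-p) + conj z * exp p‖ = ‖z * exp p + conj z * exp (-p)‖ := by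
    rw [← Complex.norm_conj, map_add, map_mul, map_mul, Complex.conj_conj, Complex.conj_ofReal,
      Complex.conj_ofReal, add_comm]
  have hint := integrable_exp_mul_besselKZero_norm α hz
  have hint_neg := hint.comp_neg
  simp only [neg_neg, norm_neg] at hint_neg
  rw [norm_besselK_sq α hz, integral_eq_integral_Ioi_add_integral_Ioi_comp_neg hint]
  simp only [neg_neg, norm_neg]
  rw [← integral_add hint.integrableOn hint_neg.integrableOn, ← integral_const_mul]
  congr with p
  rw [cosh_eq]
  ring_nf

end ProductFormula

section BoundaryOfProductFormula

theorem injOn_const_mul_sinh {c : ℝ} (hc : 0 < c) (s : Set ℝ) :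
    Set.InjOn (fun p => c * sinh p) s := fun _ _ _ _ h =>
  sinh_injective (mul_left_cancel₀ hc.ne' h)

theorem image_const_mul_sinh_Ioi {c : ℝ} (hc : 0 < c) :
    (fun p => c * sinh p) '' Set.Ioi 0 = Set.Ioi 0 := by
  refine Set.Subset.antisymm ?_ fun v hv => ⟨arsinh (v / c), ?_, ?_⟩
  · rintro _ ⟨p, hp, rfl⟩
    exact mul_pos hc (sinh_pos_iff.2 hp)
  · exact arsinh_pos_iff.2 (div_pos hv hc)
  · simp only [sinh_arsinh]
    field_simp

variable {E : Type*} [NormedAddCommGroup E] [NormedSpace ℝ E]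

theorem integral_Ioi_comp_const_mul_sinh {c : ℝ} (hc : 0 < c) (g : ℝ → E) :
    ∫ p in Set.Ioi 0, (c * cosh p) • g (c * sinh p) = ∫ v in Set.Ioi 0, g v := by
  conv_rhs => rw [← image_const_mul_sinh_Ioi hc]
  rw [integral_image_eq_integral_abs_deriv_smul measurableSet_Ioi
    (fun p _ => ((hasDerivAt_sinh p).const_mul c).hasDerivWithinAt) (injOn_const_mul_sinh hc _)]
  simp only [abs_of_pos (mul_pos hc (cosh_pos _))]

theorem integrableOn_Ioi_comp_const_mul_sinh {c : ℝ} (hc : 0 < c) {g : ℝ → E}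
    (hg : IntegrableOn g (Set.Ioi 0)) :
    IntegrableOn (fun p => (c * cosh p) • g (c * sinh p)) (Set.Ioi 0) := by
  rw [← image_const_mul_sinh_Ioi hc, integrableOn_image_iff_integrableOn_abs_deriv_smul
    measurableSet_Ioi (fun p _ => ((hasDerivAt_sinh p).const_mul c).hasDerivWithinAt)
    (injOn_const_mul_sinh hc _)] at hg
  simpa only [abs_of_pos (mul_pos hc (cosh_pos _))] using hg

theorem integrableOn_cosh_mul_besselKZero {c : ℝ} (hc : 0 < c) :
    IntegrableOn (fun p => cosh p * besselKZero (c * sinh p)) (Set.Ioi 0) := by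
  have hint := (integrableOn_Ioi_comp_const_mul_sinh hc integrableOn_besselKZero).const_mul c⁻¹
  simpa only [smul_eq_mul, mul_assoc, inv_mul_cancel_left₀ hc.ne'] using! hint

theorem cosh_mul_le_cosh {β : ℝ} (hβ : |β| ≤ 1) (p : ℝ) : cosh (β * p) ≤ cosh p := by
  rw [cosh_le_cosh, abs_mul]
  exact mul_le_of_le_one_left (abs_nonneg p) hβ

theorem continuous_besselKZero_norm {z : ℂ} (hz : 0 < z.re) :
    Continuous fun p => besselKZero ‖z * exp p + conj z * exp (-p)‖ := by
  refine continuous_iff_continuousAt.2 fun p => (continuousAt_besselKZero ?_).comp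
    (f := fun p : ℝ => ‖z * exp p + conj z * exp (-p)‖) (by fun_prop)
  refine norm_pos_iff.2 fun h => ?_
  have re_eq_zero := congrArg Complex.re h
  rw [re_mul_exp_add_conj_mul_exp_neg, Complex.zero_re] at re_eq_zero
  have : 0 < 2 * z.re * cosh p := by positivity
  exact this.ne' re_eq_zero

theorem besselKZero_norm_le {x p : ℝ} (hx : 0 < x) (hp : 0 < p) (ε : ℝ) :
    besselKZero ‖(ε - x * I) * exp p + conj (ε - x * I) * exp (-p)‖ ≤
      besselKZero (2 * x * sinh p) := by
  have hpos : 0 < 2 * x * sinh p := mul_pos (by positivity) (sinh_pos_iff.2 hp)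
  have im_eq : ((ε - x * I) * exp p + conj (ε - x * I) * exp (-p)).im = -(2 * x * sinh p) := by
    rw [im_mul_exp_add_conj_mul_exp_neg]
    simp
  have le_norm : 2 * x * sinh p ≤ ‖(ε - x * I) * exp p + conj (ε - x * I) * exp (-p)‖ := by
    rw [← abs_of_pos hpos, ← abs_neg, ← im_eq]
    exact Complex.abs_im_le_norm _
  exact antitoneOn_besselKZero hpos (hpos.trans_le le_norm) le_norm

theorem tendsto_besselKZero_norm {x p : ℝ} (hx : 0 < x) (hp : 0 < p) :
    Tendsto (fun ε : ℝ => besselKZero ‖(ε - x * I) * exp p + conj (ε - x * I) * exp (-p)‖)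
      (𝓝[>] 0) (𝓝 (besselKZero (2 * x * sinh p))) := by
  have hpos : 0 < 2 * x * sinh p := mul_pos (by positivity) (sinh_pos_iff.2 hp)
  have norm_eq : ‖((0 : ℝ) - x * I) * exp p + conj ((0 : ℝ) - x * I) * exp (-p)‖ =
      2 * x * sinh p := by
    rw [← Complex.abs_im_eq_norm.2, im_mul_exp_add_conj_mul_exp_neg, ← abs_neg]
    · simpa using abs_of_pos hpos
    · rw [re_mul_exp_add_conj_mul_exp_neg]
      simp
  refine (continuousAt_besselKZero hpos).tendsto.comp ?_
  rw [← norm_eq]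
  exact (Continuous.tendsto (by fun_prop) 0).mono_left nhdsWithin_le_nhds

theorem abs_two_mul_le_one {α : ℝ} (hα : |α| ≤ 1 / 2) : |2 * α| ≤ 1 := by
  rw [abs_mul, abs_two]
  linarith

theorem tendsto_norm_besselK_sq {α : ℝ} (hα : |α| ≤ 1 / 2) {x : ℝ} (hx : 0 < x) :
    Tendsto (fun ε : ℝ => ‖besselK α (ε - x * I)‖ ^ 2) (𝓝[>] 0)
      (𝓝 (2 * ∫ p in Set.Ioi 0, cosh (2 * α * p) * besselKZero (2 * x * sinh p))) := by
  have norm_formula : ∀ᶠ ε : ℝ in 𝓝[>] 0, 2 * ∫ p in Set.Ioi 0, cosh (2 * α * p) *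
      besselKZero ‖(ε - x * I) * exp p + conj (ε - x * I) * exp (-p)‖ =
        ‖besselK α (ε - x * I)‖ ^ 2 := by
    filter_upwards [self_mem_nhdsWithin] with ε hε
    exact (norm_besselK_sq_eq_integral_Ioi α (by simpa using hε)).symm
  refine (Tendsto.const_mul 2 ?_).congr' norm_formula
  refine tendsto_integral_filter_of_dominated_convergence
    (fun p => cosh p * besselKZero (2 * x * sinh p)) ?_ ?_
    (integrableOn_cosh_mul_besselKZero (by positivity)) ?_
  · filter_upwards [self_mem_nhdsWithin] with ε hε
    exact (Continuous.mul (by fun_prop)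
      (continuous_besselKZero_norm (by simpa using hε))).aestronglyMeasurable
  · refine .of_forall fun ε => ?_
    filter_upwards [ae_restrict_mem measurableSet_Ioi] with p hp
    rw [norm_of_nonneg (mul_nonneg (cosh_pos _).le (besselKZero_nonneg _))]
    exact mul_le_mul (cosh_mul_le_cosh (abs_two_mul_le_one hα) p) (besselKZero_norm_le hx hp ε)
      (besselKZero_nonneg _) (cosh_pos p).le
  · filter_upwards [ae_restrict_mem measurableSet_Ioi] with p hp
    exact (tendsto_besselKZero_norm hx hp).const_mul _

end BoundaryOfProductFormula

section BoundaryOfMacdonaldFunction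

/-- The associated Anger–Weber function `𝐀_β` (DLMF 11.10.4) of real order, for arguments of
positive real part. The Bessel functions and the boundary values of the Macdonald function differ
from finite trigonometric integrals by combinations of `𝐀_β` and `𝐀_{-β}`. -/
noncomputable def angerWeberA (β : ℝ) (s : ℂ) : ℂ :=
  (∫ t in Set.Ioi (0 : ℝ), Complex.exp (-s * Complex.sinh t - β * t)) / π

theorem ofReal_integral_exp_neg_mul_sinh (β x : ℝ) :
    ((∫ t in Set.Ioi (0 : ℝ), exp (-x * sinh t - β * t) : ℝ) : ℂ) = π * angerWeberA β x := by
  rw [angerWeberA, mul_div_cancel₀ _ (by exact_mod_cast pi_ne_zero), ← integral_complex_ofReal]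
  simp

theorem integrableOn_exp_neg_mul_sinh_sub {c : ℝ} (hc : 0 < c) (β : ℝ) :
    IntegrableOn (fun t => exp (-c * sinh t - β * t)) (Set.Ioi 0) := by
  obtain ⟨C, hC⟩ := exists_exp_neg_mul_sinh_sub_le hc β
  refine integrableOn_Ioi_of_norm_le_exp (C := C) (by fun_prop) one_pos fun t ht => ?_
  rw [norm_of_nonneg (exp_pos _).le, neg_mul]
  exact hC t ht

theorem one_le_cos_add_sin {θ : ℝ} (hcos : 0 ≤ cos θ) (hsin : 0 ≤ sin θ) :
    1 ≤ cos θ + sin θ := by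
  nlinarith [sin_sq_add_cos_sq θ, mul_nonneg hcos hsin]

theorem hasExpDecayOnHalfStrip_exp_neg_mul_cosh_zero_pi_div_two {z : ℂ} (hre : 0 < z.re)
    (him : z.im < 0) (β : ℝ) :
    HasExpDecayOnHalfStrip (fun w => Complex.exp (-z * Complex.cosh w - β * w)) 0 (π / 2) := by
  rw [← neg_pos] at him
  have cos_nonneg_and_sin_nonneg : ∀ θ ∈ Set.uIcc 0 (π / 2), 0 ≤ cos θ ∧ 0 ≤ sin θ := by
    intro θ hθ
    rw [Set.uIcc_of_le (by positivity)] at hθ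
    exact ⟨cos_nonneg_of_mem_Icc ⟨by linarith [hθ.1, pi_pos], hθ.2⟩,
      sin_nonneg_of_mem_Icc ⟨hθ.1, by linarith [hθ.2, pi_pos]⟩⟩
  refine hasExpDecayOnHalfStrip_exp_neg_mul_cosh (lt_min hre him)
    (fun θ hθ => mul_nonneg hre.le (cos_nonneg_and_sin_nonneg θ hθ).1) (fun θ hθ => ?_) β
  obtain ⟨hcos, hsin⟩ := cos_nonneg_and_sin_nonneg θ hθ
  calc min z.re (-z.im) ≤ min z.re (-z.im) * (cos θ + sin θ) :=
        le_mul_of_one_le_right (lt_min hre him).le (one_le_cos_add_sin hcos hsin)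
    _ = min z.re (-z.im) * cos θ + min z.re (-z.im) * sin θ := mul_add _ _ _
    _ ≤ z.re * cos θ + -z.im * sin θ :=
        add_le_add (mul_le_mul_of_nonneg_right (min_le_left _ _) hcos)
          (mul_le_mul_of_nonneg_right (min_le_right _ _) hsin)
    _ = z.re * cos θ - z.im * sin θ := by ring

theorem integral_exp_neg_mul_cosh_add_pi_div_two_mul_I (z : ℂ) (β : ℝ) :
    ∫ t in Set.Ioi (0 : ℝ), Complex.exp (-z * Complex.cosh (t + (π / 2 : ℝ) * I)
        - β * (t + (π / 2 : ℝ) * I)) =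
      Complex.exp (-(β * (π / 2) * I)) * (π * angerWeberA β (z * I)) := by
  rw [angerWeberA, mul_div_cancel₀ _ (by exact_mod_cast pi_ne_zero), ← integral_const_mul]
  congr with t
  rw [← Complex.exp_add, Complex.cosh_add, Complex.cosh_mul_I, Complex.sinh_mul_I]
  push_cast
  rw [Complex.cos_pi_div_two, Complex.sin_pi_div_two]
  ring_nf

theorem two_mul_besselK_eq {z : ℂ} (hre : 0 < z.re) (him : z.im < 0) (α : ℝ) :
    2 * besselK α z =
      Complex.exp (-(α * (π / 2) * I)) * (π * angerWeberA α (z * I)) +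
      Complex.exp (α * (π / 2) * I) * (π * angerWeberA (-α) (z * I)) +
      I * ∫ θ in (-(π / 2))..(π / 2), Complex.exp (-z * Complex.cos θ - α * (θ * I)) := by
  have decay := hasExpDecayOnHalfStrip_exp_neg_mul_cosh_zero_pi_div_two hre him
  have hcontour := (decay α).integral_eq (a := -(π / 2)) (by simpa using decay (-α))
    (by fun_prop)
  have left : ∫ t in Set.Ioi (0 : ℝ), Complex.exp (-z * Complex.cosh (-t + (-(π / 2) : ℝ) * I)
      - α * (-t + (-(π / 2) : ℝ) * I)) =
      Complex.exp (α * (π / 2) * I) * (π * angerWeberA (-α) (z * I)) := by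
    have reflected := integral_exp_neg_mul_cosh_add_pi_div_two_mul_I z (-α)
    simp only [Complex.ofReal_neg, neg_mul, neg_neg] at reflected
    rw [← reflected]
    congr with t
    rw [show -(t : ℂ) + (-(π / 2) : ℝ) * I = -(t + (π / 2 : ℝ) * I) by push_cast; ring,
      Complex.cosh_neg]
    ring_nf
  rw [integral_exp_neg_mul_cosh_add_pi_div_two_mul_I, left] at hcontour
  simp only [Complex.cosh_mul_I] at hcontour
  rw [besselK, mul_div_cancel₀ _ two_ne_zero, hcontour]

theorem tendsto_angerWeberA {x : ℝ} (hx : 0 < x) (β : ℝ) :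
    Tendsto (fun ε : ℝ => angerWeberA β ((ε - x * I) * I)) (𝓝[>] 0) (𝓝 (angerWeberA β x)) := by
  refine Tendsto.div_const (tendsto_integral_filter_of_dominated_convergence _
    (.of_forall fun ε => Continuous.aestronglyMeasurable (by fun_prop)) ?_
    (integrableOn_exp_neg_mul_sinh_sub hx β) ?_) _
  · refine .of_forall fun ε => .of_forall fun t => ?_
    rw [Complex.norm_exp, ← Complex.ofReal_sinh]
    simp [-Complex.ofReal_sinh]
  · refine .of_forall fun t => ?_
    have hcont : Continuous fun ε : ℝ =>
        Complex.exp (-((ε - x * I) * I) * Complex.sinh t - β * t) := by fun_prop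
    simpa [mul_assoc] using (hcont.tendsto 0).mono_left (nhdsWithin_le_nhds (s := Set.Ioi 0))

theorem tendsto_integral_exp_neg_mul_cos (x α a b : ℝ) :
    Tendsto (fun ε : ℝ => ∫ θ in a..b, Complex.exp (-(ε - x * I) * Complex.cos θ - α * (θ * I)))
      (𝓝[>] 0) (𝓝 (∫ θ in a..b, Complex.exp (x * I * Complex.cos θ - α * (θ * I)))) := by
  have hcont : Continuous fun ε : ℝ =>
      ∫ θ in a..b, Complex.exp (-(ε - x * I) * Complex.cos θ - α * (θ * I)) :=
    intervalIntegral.continuous_parametric_intervalIntegral_of_continuous' (by fun_prop) _ _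
  simpa using (hcont.tendsto 0).mono_left (nhdsWithin_le_nhds (s := Set.Ioi 0))

theorem integral_exp_mul_cos_eq_integral_exp_mul_sin (x α : ℝ) :
    ∫ θ in (-(π / 2))..(π / 2), Complex.exp (x * I * Complex.cos θ - α * (θ * I)) =
      Complex.exp (α * (π / 2) * I) *
        ∫ θ in (0 : ℝ)..π, Complex.exp ((x * sin θ - α * θ : ℝ) * I) := by
  have shift := intervalIntegral.integral_comp_sub_right (a := 0) (b := π)
    (fun θ : ℝ => Complex.exp (x * I * Complex.cos θ - α * (θ * I))) (π / 2)
  rw [zero_sub, sub_half] at shift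
  rw [← shift, ← intervalIntegral.integral_const_mul]
  refine intervalIntegral.integral_congr fun θ _ => ?_
  rw [← Complex.exp_add, ← Complex.ofReal_cos, cos_sub_pi_div_two]
  push_cast
  ring_nf

theorem integral_exp_mul_I {g : ℝ → ℝ} (hg : Continuous g) (a b : ℝ) :
    ∫ θ in a..b, Complex.exp (g θ * I) =
      (∫ θ in a..b, cos (g θ) : ℝ) + (∫ θ in a..b, sin (g θ) : ℝ) * I := by
  simp only [Complex.exp_mul_I, ← Complex.ofReal_cos, ← Complex.ofReal_sin]
  rw [intervalIntegral.integral_add (Continuous.intervalIntegrable (by fun_prop) _ _)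
      (Continuous.intervalIntegrable (by fun_prop) _ _),
    intervalIntegral.integral_mul_const, intervalIntegral.integral_ofReal,
    intervalIntegral.integral_ofReal]

theorem tendsto_besselK {x : ℝ} (hx : 0 < x) (α : ℝ) :
    Tendsto (fun ε : ℝ => besselK α (ε - x * I)) (𝓝[>] 0)
      (𝓝 (I * (π / 2) * Complex.exp (α * (π / 2) * I) *
        ((∫ θ in (0 : ℝ)..π, Complex.exp ((x * sin θ - α * θ : ℝ) * I)) / π -
          I * angerWeberA (-α) x - I * Complex.exp (-(α * π * I)) * angerWeberA α x))) := by
  have hlim := ((((tendsto_angerWeberA hx α).const_mul (π : ℂ)).const_mul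
    (Complex.exp (-(α * (π / 2) * I)))).add
      (((tendsto_angerWeberA hx (-α)).const_mul (π : ℂ)).const_mul
        (Complex.exp (α * (π / 2) * I)))).add
      ((tendsto_integral_exp_neg_mul_cos x α (-(π / 2)) (π / 2)).const_mul I)
  rw [integral_exp_mul_cos_eq_integral_exp_mul_sin] at hlim
  have half_turn : Complex.exp (α * (π / 2) * I) * Complex.exp (-(α * π * I)) =
      Complex.exp (-(α * (π / 2) * I)) := by
    rw [← Complex.exp_add]
    ring_nf
  have pi_ne_zero : (π : ℂ) ≠ 0 := by exact_mod_cast Real.pi_ne_zero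
  convert (hlim.div_const 2).congr' ?_ using 2
  · rw [← half_turn]
    generalize Complex.exp (-(α * π * I)) = halfTurn
    field_simp
    linear_combination (-(π * angerWeberA (-α) x) -
      π * halfTurn * angerWeberA α x) * Complex.I_sq
  · filter_upwards [self_mem_nhdsWithin] with ε hε
    rw [← two_mul_besselK_eq (by simpa using hε) (by simpa using hx),
      mul_div_cancel_left₀ _ two_ne_zero]

end BoundaryOfMacdonaldFunction

section HankelContour

/-- The circular part `|u| = r`, cut along the negative real axis, of Hankel's contour integral
`∫ exp(u) u^(-ν-1) du` for the reciprocal Gamma function, normalised by `u = r exp(iθ)` and with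
the constant factor `i r^(-ν)` removed. -/
noncomputable def hankelCircle (r ν : ℝ) : ℂ :=
  ∫ θ in (-π)..π, Complex.exp (r * Complex.exp (θ * I) - ν * θ * I)

/-- The radial part of Hankel's contour integral, along either side of the cut `u ≤ -r`, written
with `|u| = r exp(t)` and with the phase and the factor `r^(-ν)` removed. -/
noncomputable def hankelRay (r ν : ℝ) : ℝ :=
  ∫ t in Set.Ioi (0 : ℝ), exp (-r * exp t - ν * t)

variable {r ν : ℝ}

theorem integrableOn_exp_neg_mul_exp_sub (hr : 0 < r) (ν : ℝ) :
    IntegrableOn (fun t => exp (-r * exp t - ν * t)) (Set.Ioi 0) := by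
  refine Integrable.mono' (integrableOn_exp_neg_mul_sinh_sub hr ν)
    (Continuous.aestronglyMeasurable (by fun_prop)) (.of_forall fun t => ?_)
  have sinh_le_exp : sinh t ≤ exp t := by
    linarith [sinh_add_cosh t, cosh_pos t]
  rw [norm_of_nonneg (exp_pos _).le, neg_mul, neg_mul]
  gcongr

theorem mul_hankelRay_sub_one (hr : 0 < r) (ν : ℝ) :
    r * hankelRay r (ν - 1) + ν * hankelRay r ν = exp (-r) := by
  have hint := integrableOn_exp_neg_mul_exp_sub hr ν
  have hint_pred := (integrableOn_exp_neg_mul_exp_sub hr (ν - 1)).const_mul r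
  have hderiv : ∀ t ∈ Set.Ioi (0 : ℝ), HasDerivAt (fun t => -exp (-r * exp t - ν * t))
      (r * exp (-r * exp t - (ν - 1) * t) + ν * exp (-r * exp t - ν * t)) t := by
    intro t _
    refine ((((hasDerivAt_exp t).const_mul (-r)).sub
      ((hasDerivAt_id t).const_mul ν)).exp).neg.congr_deriv ?_
    rw [show -r * exp t - (ν - 1) * t = (-r * exp t - ν * t) + t by ring, exp_add]
    simp only [Pi.sub_apply, id]
    ring
  have hderiv_int := hint_pred.add (hint.const_mul ν)
  have hlim := tendsto_zero_of_hasDerivAt_of_integrableOn_Ioi hderiv hderiv_int hint.neg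
  have ftc := integral_Ioi_of_hasDerivAt_of_tendsto
    (Continuous.continuousWithinAt (by fun_prop)) hderiv hderiv_int hlim
  rw [integral_add hint_pred (hint.const_mul ν), integral_const_mul, integral_const_mul] at ftc
  simpa [hankelRay] using ftc

theorem exp_mul_exp_mul_I_sub_of_exp_eq_neg_one {θ : ℝ} (hθ : Complex.exp (θ * I) = -1) :
    Complex.exp (r * Complex.exp (θ * I) - ν * θ * I) =
      exp (-r) * (cos (ν * θ) - sin (ν * θ) * I) := by
  rw [hθ, show (r * -1 - ν * θ * I : ℂ) = (-r : ℝ) + (-(ν * θ) : ℝ) * I by push_cast; ring,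
    Complex.exp_add, Complex.exp_ofReal_mul_I, cos_neg, sin_neg]
  push_cast
  ring

theorem mul_hankelCircle_sub_one (r ν : ℝ) :
    r * hankelCircle r (ν - 1) - ν * hankelCircle r ν = -(2 * sin (π * ν) * exp (-r) : ℝ) := by
  have hderiv : ∀ θ ∈ Set.uIcc (-π) π, HasDerivAt
      (fun θ : ℝ => Complex.exp (r * Complex.exp (θ * I) - ν * θ * I))
      (I * (r * Complex.exp (r * Complex.exp (θ * I) - (ν - 1 : ℝ) * θ * I) -
        ν * Complex.exp (r * Complex.exp (θ * I) - ν * θ * I))) θ := by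
    intro θ _
    have hofReal : HasDerivAt (fun θ : ℝ => (θ : ℂ)) 1 θ := Complex.ofRealCLM.hasDerivAt
    refine ((((hofReal.mul_const I).cexp).const_mul (r : ℂ)).sub
      ((hofReal.const_mul (ν : ℂ)).mul_const I)).cexp.congr_deriv ?_
    rw [show (r * Complex.exp (θ * I) - (ν - 1 : ℝ) * θ * I : ℂ) =
      (r * Complex.exp (θ * I) - ν * θ * I) + θ * I by push_cast; ring, Complex.exp_add]
    simp only [Pi.sub_apply]
    ring
  have ftc := intervalIntegral.integral_eq_sub_of_hasDerivAt hderiv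
    (Continuous.intervalIntegrable (by fun_prop) _ _)
  rw [intervalIntegral.integral_const_mul, intervalIntegral.integral_sub
    (Continuous.intervalIntegrable (by fun_prop) _ _)
    (Continuous.intervalIntegrable (by fun_prop) _ _), intervalIntegral.integral_const_mul,
    intervalIntegral.integral_const_mul,
    exp_mul_exp_mul_I_sub_of_exp_eq_neg_one Complex.exp_pi_mul_I,
    exp_mul_exp_mul_I_sub_of_exp_eq_neg_one (by simp [Complex.exp_neg]),
    mul_neg ν, cos_neg, sin_neg, mul_comm ν π] at ftc
  refine mul_left_cancel₀ Complex.I_ne_zero (ftc.trans ?_)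
  push_cast
  ring

theorem hasExpDecayOnHalfStrip_exp_mul_exp_neg_add (r : ℝ) (hν : ν < 0) (a b : ℝ) :
    HasExpDecayOnHalfStrip (fun w => Complex.exp (r * Complex.exp (-w) + ν * w)) a b := by
  refine ⟨exp |r|, -ν, neg_pos.mpr hν, fun t ht θ _ => ?_⟩
  have exp_neg_le_one : ‖Complex.exp (-(t + θ * I))‖ ≤ 1 := by
    simpa [Complex.norm_exp] using ht
  have re_le : (r * Complex.exp (-(t + θ * I))).re ≤ |r| :=
    calc (r * Complex.exp (-(t + θ * I))).re ≤ ‖r * Complex.exp (-(t + θ * I))‖ :=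
          Complex.re_le_norm _
      _ ≤ |r| := by
          rw [norm_mul, Complex.norm_real, norm_eq_abs]
          exact mul_le_of_le_one_right (abs_nonneg r) exp_neg_le_one
  have re_linear : (ν * (t + θ * I) : ℂ).re = ν * t := by simp
  rw [Complex.norm_exp, ← exp_add, Complex.add_re, re_linear, neg_neg]
  gcongr

/-- Collapsing the circle onto the two sides of the segment `[-r, 0]`. -/
theorem hankelCircle_of_neg (r : ℝ) (hν : ν < 0) :
    hankelCircle r ν =
      (-2 * sin (π * ν) * ∫ t in Set.Ioi (0 : ℝ), exp (-r * exp (-t) + ν * t) : ℝ) := by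
  have hdecay := hasExpDecayOnHalfStrip_exp_mul_exp_neg_add r hν (-π) π
  have hshift := hdecay.integral_Ioi_sub_integral_Ioi (by fun_prop)
  have hcircle : ∫ θ in (-π)..π, Complex.exp (r * Complex.exp (-(θ * I)) + ν * (θ * I)) =
      hankelCircle r ν := by
    rw [hankelCircle, ← neg_neg π, ← intervalIntegral.integral_comp_neg, neg_neg]
    refine intervalIntegral.integral_congr fun θ _ => ?_
    push_cast
    ring_nf
  have hside (θ : ℝ) (hθ : Complex.exp (-(θ * I)) = -1) :
      ∫ t in Set.Ioi (0 : ℝ), Complex.exp (r * Complex.exp (-(t + θ * I)) + ν * (t + θ * I)) =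
        Complex.exp ((ν * θ : ℝ) * I) *
          (∫ t in Set.Ioi (0 : ℝ), exp (-r * exp (-t) + ν * t) : ℝ) := by
    rw [← integral_complex_ofReal, ← integral_const_mul]
    congr with t
    rw [neg_add, Complex.exp_add (-t), hθ, Complex.ofReal_exp, ← Complex.exp_add]
    push_cast
    ring_nf
  rw [hcircle, hside π (by simp [Complex.exp_neg]), hside (-π) (by simp), mul_neg,
    Complex.exp_ofReal_mul_I, Complex.exp_ofReal_mul_I, cos_neg, sin_neg, mul_comm ν] at hshift
  refine mul_left_cancel₀ Complex.I_ne_zero (hshift.symm.trans ?_)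
  push_cast
  ring

theorem hankelCircle_zero (r : ℝ) : hankelCircle r 0 = 2 * π := by
  have mean_value := (show Differentiable ℂ Complex.exp by fun_prop).diffContOnCl.circleAverage
    (c := 0) (R := r)
  rw [circleAverage_eq_integral_add (-π),
    intervalIntegral.integral_comp_add_right (fun θ => Complex.exp (circleMap 0 r θ))] at mean_value
  rw [inv_smul_eq_iff₀ (by positivity)] at mean_value
  simpa [hankelCircle, circleMap, two_mul] using mean_value

theorem integral_exp_neg_mul_exp_sub (hr : 0 < r) (hν : ν < 0) :
    ∫ t, exp (-r * exp t - ν * t) = r ^ ν * Gamma (-ν) := by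
  have hsubst := integral_image_eq_integral_abs_deriv_smul (s := Set.univ) MeasurableSet.univ
    (fun t _ => (hasDerivAt_exp t).hasDerivWithinAt) exp_injective.injOn
    (fun u => u ^ (-ν - 1) * exp (-(r * u)))
  rw [Set.image_univ, range_exp, integral_rpow_mul_exp_neg_mul_Ioi (neg_pos.mpr hν) hr,
    Measure.restrict_univ, one_div, inv_rpow hr.le, ← rpow_neg hr.le, neg_neg] at hsubst
  rw [hsubst]
  congr with t
  rw [abs_of_pos (exp_pos t), ← exp_mul, smul_eq_mul, ← exp_add, ← exp_add]
  ring_nf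

theorem integral_Ioi_add_hankelRay (hr : 0 < r) (hν : ν < 0) :
    (∫ t in Set.Ioi (0 : ℝ), exp (-r * exp (-t) + ν * t)) + hankelRay r ν =
      r ^ ν * Gamma (-ν) := by
  have hint_neg : IntegrableOn (fun t => exp (-r * exp (-t) - ν * -t)) (Set.Ioi 0) := by
    refine integrableOn_Ioi_of_norm_le_exp (C := 1) (by fun_prop) (neg_pos.mpr hν) fun t _ => ?_
    rw [norm_of_nonneg (exp_pos _).le, one_mul]
    gcongr
    linarith [mul_pos hr (exp_pos (-t))]
  have hint := integrable_of_integrableOn_Ioi_of_comp_neg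
    (integrableOn_exp_neg_mul_exp_sub hr ν) hint_neg
  rw [← integral_exp_neg_mul_exp_sub hr hν,
    integral_eq_integral_Ioi_add_integral_Ioi_comp_neg hint, add_comm]
  simp only [mul_neg, sub_neg_eq_add]
  rfl

theorem neg_sin_mul_Gamma_neg (hν : ν < 0) : -sin (π * ν) * Gamma (-ν) = π / Gamma (ν + 1) := by
  have reflection := Gamma_mul_Gamma_one_sub (-ν)
  rw [sub_neg_eq_add, add_comm, mul_neg, sin_neg] at reflection
  have hGamma : Gamma (-ν) ≠ 0 := (Gamma_pos_of_pos (neg_pos.mpr hν)).ne'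
  -- At a pole of `Γ(ν + 1)` both sides vanish, since Mathlib's `Γ` is `0` there.
  rcases eq_or_ne (sin (π * ν)) 0 with hsin | hsin
  · have hpole : Gamma (ν + 1) = 0 := by simpa [hsin, hGamma] using reflection
    rw [hsin, hpole, neg_zero, zero_mul, div_zero]
  · rw [eq_div_iff (neg_ne_zero.mpr hsin)] at reflection
    have hpole : Gamma (ν + 1) ≠ 0 :=
      right_ne_zero_of_mul (left_ne_zero_of_mul (reflection ▸ pi_ne_zero))
    rw [eq_div_iff hpole]
    linear_combination reflection

theorem hankelCircle_eq (hr : 0 < r) (ν : ℝ) :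
    hankelCircle r ν =
      (2 * π * r ^ ν / Gamma (ν + 1) + 2 * sin (π * ν) * hankelRay r ν : ℝ) := by
  obtain ⟨n, hn⟩ := exists_nat_ge ν
  induction n generalizing ν with
  | zero =>
    rcases (Nat.cast_zero (R := ℝ) ▸ hn).lt_or_eq with hneg | rfl
    · rw [hankelCircle_of_neg r hneg]
      congr 1
      linear_combination (-2 * sin (π * ν)) * integral_Ioi_add_hankelRay hr hneg +
        2 * r ^ ν * neg_sin_mul_Gamma_neg hneg
    · simp [hankelCircle_zero]
  | succ n ih =>
    rcases le_or_gt ν 0 with hnonpos | hpos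
    · exact ih ν (hnonpos.trans n.cast_nonneg)
    have hcircle := mul_hankelCircle_sub_one r ν
    have hray := mul_hankelRay_sub_one hr ν
    rw [ih (ν - 1) (by push_cast at hn; linarith), sub_add_cancel, mul_sub π, mul_one,
      sin_sub_pi, rpow_sub_one hr.ne'] at hcircle
    rw [Gamma_add_one hpos.ne']
    have hΓ := (Gamma_pos_of_pos hpos).ne'
    have hreal : ν * (2 * π * r ^ ν / (ν * Gamma ν) + 2 * sin (π * ν) * hankelRay r ν) =
        r * (2 * π * (r ^ ν / r) / Gamma ν + 2 * -sin (π * ν) * hankelRay r (ν - 1)) +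
          2 * sin (π * ν) * exp (-r) := by
      generalize sin (π * ν) = s
      field_simp
      linear_combination (s * Gamma ν) * hray
    refine mul_left_cancel₀ (Complex.ofReal_ne_zero.mpr hpos.ne') ?_
    rw [← Complex.ofReal_mul, hreal, Complex.ofReal_add, Complex.ofReal_mul r]
    push_cast at hcircle ⊢
    linear_combination -hcircle

end HankelContour

section SchlaefliIntegral

theorem hasSum_pow_div_factorial_mul_exp_add (a u v : ℂ) :
    HasSum (fun k : ℕ => a ^ k / k.factorial * Complex.exp (u + k * v))
      (Complex.exp (a * Complex.exp v + u)) := by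
  have hexp := (NormedSpace.expSeries_div_hasSum_exp (a * Complex.exp v)).mul_right (Complex.exp u)
  rw [← Complex.exp_eq_exp_ℂ, ← Complex.exp_add] at hexp
  refine hexp.congr_fun fun k => ?_
  rw [mul_pow, ← Complex.exp_nat_mul, Complex.exp_add]
  ring

theorem hasSum_pow_mul_hankelCircle (r ν : ℝ) :
    HasSum (fun k : ℕ => (-r : ℂ) ^ k / k.factorial * hankelCircle r (ν + k))
      (∫ θ in (-π)..π, Complex.exp ((2 * r * sin θ - ν * θ : ℝ) * I)) := by
  simp only [hankelCircle, ← intervalIntegral.integral_const_mul]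
  refine intervalIntegral.hasSum_integral_of_dominated_convergence
    (fun k _ => |r| ^ k / k.factorial * exp |r|)
    (fun k => Continuous.aestronglyMeasurable (by fun_prop)) (fun k => .of_forall fun θ _ => ?_)
    (.of_forall fun θ _ => (summable_pow_div_factorial _).mul_right _) intervalIntegrable_const
    (.of_forall fun θ _ => ?_)
  · have mul_cos_le : r * cos θ ≤ |r| := (le_abs_self _).trans <| by
      rw [abs_mul]
      exact mul_le_of_le_one_right (abs_nonneg _) (abs_cos_le_one θ)
    rw [norm_mul, norm_div, norm_pow, norm_neg, Complex.norm_real, Complex.norm_natCast,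
      norm_eq_abs, Complex.norm_exp]
    gcongr
    simpa [Complex.exp_ofReal_mul_I_re] using mul_cos_le
  · have hexp := hasSum_pow_div_factorial_mul_exp_add (-r)
      (r * Complex.exp (θ * I) - ν * θ * I) (-(θ * I))
    have exponent : -r * Complex.exp (-(θ * I)) + (r * Complex.exp (θ * I) - ν * θ * I) =
        (2 * r * sin θ - ν * θ : ℝ) * I := by
      rw [← neg_mul (θ : ℂ), Complex.exp_mul_I, Complex.exp_mul_I, Complex.cos_neg,
        Complex.sin_neg]
      push_cast
      ring
    rw [exponent] at hexp
    refine hexp.congr_fun fun k => ?_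
    push_cast
    ring_nf

theorem hasSum_pow_mul_hankelRay {r : ℝ} (hr : 0 < r) (ν : ℝ) :
    HasSum (fun k : ℕ => r ^ k / k.factorial * hankelRay r (ν + k))
      (∫ t in Set.Ioi (0 : ℝ), exp (-(2 * r) * sinh t - ν * t)) := by
  simp only [hankelRay, ← integral_const_mul]
  refine hasSum_integral_of_dominated_convergence
    (fun k t => r ^ k / k.factorial * exp (-r * exp t - ν * t))
    (fun k => Continuous.aestronglyMeasurable (by fun_prop)) (fun k => ?_)
    (.of_forall fun t => (summable_pow_div_factorial _).mul_right _) ?_ (.of_forall fun t => ?_)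
  · filter_upwards [ae_restrict_mem measurableSet_Ioi] with t ht
    rw [norm_of_nonneg (by positivity), add_mul]
    gcongr
    exact le_add_of_nonneg_right (mul_nonneg k.cast_nonneg (le_of_lt ht))
  · simp only [tsum_mul_right]
    exact (integrableOn_exp_neg_mul_exp_sub hr ν).const_mul _
  · have hexp := hasSum_pow_div_factorial_mul_exp_add r (-r * Complex.exp t - ν * t) (-t)
    have exponent : r * Complex.exp (-t) + (-r * Complex.exp t - ν * t) =
        -(2 * r) * Complex.sinh t - ν * t := by
      rw [Complex.sinh]
      ring
    rw [exponent] at hexp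
    rw [← Complex.hasSum_ofReal]
    push_cast
    refine hexp.congr_fun fun k => ?_
    ring_nf

theorem besselJ_term_eq {x : ℝ} (hx : 0 < x) (α : ℝ) (k : ℕ) :
    ((((-1 : ℝ) ^ k / (k.factorial * Gamma (k + α + 1))) * (x / 2) ^ (2 * (k : ℝ) + α) : ℝ) : ℂ) =
      1 / (2 * π) * ((-(x / 2 : ℝ)) ^ k / k.factorial * hankelCircle (x / 2) (α + k)) -
        sin (α * π) / π *
          ((x / 2) ^ k / k.factorial * hankelRay (x / 2) (α + k) : ℝ) := by
  have hr : 0 < x / 2 := half_pos hx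
  have sin_shift : sin (π * (α + k)) = (-1) ^ k * sin (α * π) := by
    rw [mul_add, mul_comm π (k : ℝ), sin_add_nat_mul_pi, mul_comm π]
  have pow_split : (x / 2) ^ (2 * (k : ℝ) + α) = (x / 2) ^ k * (x / 2) ^ (α + k) := by
    rw [← rpow_natCast, ← rpow_add hr]
    ring_nf
  have sign_sq : ((-1 : ℂ) ^ k) * (-1) ^ k = 1 := by rw [← mul_pow]; simp
  have pi_ne_zero : (π : ℂ) ≠ 0 := by exact_mod_cast Real.pi_ne_zero
  rw [hankelCircle_eq hr, sin_shift, pow_split, neg_pow ((x / 2 : ℝ) : ℂ), add_comm (k : ℝ) α]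
  push_cast
  generalize (hankelRay (x / 2) (α + k) : ℂ) = ray
  generalize (x / 2 : ℂ) ^ k = power
  generalize Complex.sin (α * π) = sine
  field_simp
  linear_combination (-(power / k.factorial * ray * sine)) * sign_sq

theorem ofReal_besselJ_eq_integral {x : ℝ} (hx : 0 < x) (α : ℝ) :
    (besselJ α x : ℂ) =
      1 / (2 * π) * (∫ θ in (-π)..π, Complex.exp ((x * sin θ - α * θ : ℝ) * I)) -
        sin (α * π) / π * (∫ t in Set.Ioi (0 : ℝ), exp (-x * sinh t - α * t) : ℝ) := by
  have hcircle := (hasSum_pow_mul_hankelCircle (x / 2) α).mul_left (1 / (2 * π) : ℂ)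
  have hray := (Complex.hasSum_ofReal.mpr (hasSum_pow_mul_hankelRay (half_pos hx) α)).mul_left
    (sin (α * π) / π : ℂ)
  rw [mul_div_cancel₀ x two_ne_zero] at hcircle hray
  rw [besselJ, Complex.ofReal_tsum]
  simp only [besselJ_term_eq hx]
  exact (hcircle.sub hray).tsum_eq

theorem integral_exp_mul_I_of_odd {g : ℝ → ℝ} (hg : Continuous g) (hodd : g.Odd) (a : ℝ) :
    ∫ θ in (-a)..a, Complex.exp (g θ * I) = 2 * (∫ θ in (0 : ℝ)..a, cos (g θ) : ℝ) := by
  have hcont : Continuous fun θ => Complex.exp (g θ * I) := by fun_prop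
  have reflect := intervalIntegral.integral_comp_neg (a := 0) (b := a)
    fun θ => Complex.exp (g θ * I)
  rw [neg_zero] at reflect
  rw [← intervalIntegral.integral_add_adjacent_intervals (hcont.intervalIntegrable _ 0)
    (hcont.intervalIntegrable _ _), ← reflect]
  simp only [hodd _]
  rw [integral_exp_mul_I hg, integral_exp_mul_I (g := fun θ => -g θ) (by fun_prop)]
  simp only [cos_neg, sin_neg, intervalIntegral.integral_neg]
  push_cast
  ring

theorem besselJ_eq_integral {x : ℝ} (hx : 0 < x) (α : ℝ) :
    besselJ α x = (∫ θ in (0 : ℝ)..π, cos (x * sin θ - α * θ)) / π -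
      sin (α * π) / π * ∫ t in Set.Ioi (0 : ℝ), exp (-x * sinh t - α * t) := by
  have hodd : Function.Odd fun θ => x * sin θ - α * θ := fun θ => by
    simp only [sin_neg]
    ring
  have h := ofReal_besselJ_eq_integral hx α
  rw [integral_exp_mul_I_of_odd (by fun_prop) hodd] at h
  rw [← Complex.ofReal_inj, h]
  push_cast
  ring

end SchlaefliIntegral

section NicholsonFormula

theorem ofReal_besselJ_eq {x : ℝ} (hx : 0 < x) (α : ℝ) :
    (besselJ α x : ℂ) = (∫ θ in (0 : ℝ)..π, cos (x * sin θ - α * θ) : ℝ) / π -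
      sin (α * π) * angerWeberA α x := by
  have pi_ne_zero : (π : ℂ) ≠ 0 := by exact_mod_cast Real.pi_ne_zero
  rw [besselJ_eq_integral hx, Complex.ofReal_sub, Complex.ofReal_mul,
    ofReal_integral_exp_neg_mul_sinh]
  push_cast
  field_simp

theorem ofReal_besselY_eq {x : ℝ} (hx : 0 < x) (α : ℝ) :
    (besselY α x : ℂ) = (∫ θ in (0 : ℝ)..π, sin (x * sin θ - α * θ) : ℝ) / π -
      angerWeberA (-α) x - cos (α * π) * angerWeberA α x := by
  have hsplit : ∫ t in Set.Ioi (0 : ℝ),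
      (exp (α * t) + exp (-α * t) * cos (α * π)) * exp (-x * sinh t) =
      (∫ t in Set.Ioi (0 : ℝ), exp (-x * sinh t - -α * t)) +
        cos (α * π) * ∫ t in Set.Ioi (0 : ℝ), exp (-x * sinh t - α * t) := by
    rw [← integral_const_mul, ← integral_add (integrableOn_exp_neg_mul_sinh_sub hx (-α))
      ((integrableOn_exp_neg_mul_sinh_sub hx α).const_mul _)]
    congr with t
    rw [sub_eq_neg_add, sub_eq_neg_add, exp_add, exp_add]
    ring_nf
  have pi_ne_zero : (π : ℂ) ≠ 0 := by exact_mod_cast Real.pi_ne_zero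
  rw [besselY, hsplit, Complex.ofReal_sub, Complex.ofReal_mul (1 / π) (_ + _), Complex.ofReal_add,
    Complex.ofReal_mul (cos _), ofReal_integral_exp_neg_mul_sinh, ofReal_integral_exp_neg_mul_sinh]
  push_cast
  field_simp
  ring

theorem besselJ_add_besselY_mul_I {x : ℝ} (hx : 0 < x) (α : ℝ) :
    (besselJ α x + besselY α x * I : ℂ) =
      (∫ θ in (0 : ℝ)..π, Complex.exp ((x * sin θ - α * θ : ℝ) * I)) / π -
        I * angerWeberA (-α) x - I * Complex.exp (-(α * π * I)) * angerWeberA α x := by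
  have half_turn : Complex.exp (-(α * π * I)) = cos (α * π) - sin (α * π) * I := by
    rw [← neg_mul, ← Complex.ofReal_mul, ← Complex.ofReal_neg, Complex.exp_ofReal_mul_I, cos_neg,
      sin_neg, Complex.ofReal_neg]
    ring
  rw [half_turn, integral_exp_mul_I (by fun_prop), ofReal_besselJ_eq hx, ofReal_besselY_eq hx]
  linear_combination (-sin (α * π) * angerWeberA α x) * Complex.I_sq

theorem tendsto_besselK_nhds_besselJ_add_besselY_mul_I {x : ℝ} (hx : 0 < x) (α : ℝ) :
    Tendsto (fun ε : ℝ => besselK α (ε - x * I)) (𝓝[>] 0)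
      (𝓝 (I * (π / 2) * Complex.exp (α * (π / 2) * I) * (besselJ α x + besselY α x * I))) := by
  rw [besselJ_add_besselY_mul_I hx]
  exact tendsto_besselK hx α

theorem besselJ_sq_add_besselY_sq {α : ℝ} (hα : |α| ≤ 1 / 2) {x : ℝ} (hx : 0 < x) :
    besselJ α x ^ 2 + besselY α x ^ 2 =
      8 / π ^ 2 * ∫ p in Set.Ioi 0, cosh (2 * α * p) * besselKZero (2 * x * sinh p) := by
  have hphase : ‖Complex.exp (α * (π / 2) * I)‖ = 1 := by
    exact_mod_cast Complex.norm_exp_ofReal_mul_I (α * (π / 2))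
  have hnorm : ‖I * (π / 2) * Complex.exp (α * (π / 2) * I) *
      (besselJ α x + besselY α x * I)‖ ^ 2 =
      (π / 2) ^ 2 * (besselJ α x ^ 2 + besselY α x ^ 2) := by
    rw [norm_mul, norm_mul, norm_mul, hphase, Complex.norm_I, mul_pow,
      ← Complex.normSq_eq_norm_sq (_ + _), Complex.normSq_add_mul_I]
    simp [abs_of_pos pi_pos]
  have hlim := tendsto_nhds_unique
    ((tendsto_besselK_nhds_besselJ_add_besselY_mul_I hx α).norm.pow 2)
    (tendsto_norm_besselK_sq hα hx)
  rw [hnorm] at hlim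
  field_simp at hlim ⊢
  linear_combination hlim

/-- The factor `cosh (β p) / cosh p` of Nicholson's integrand after the substitution
`u = sinh p`; it carries the whole dependence on the order, through `β = 2α`. -/
noncomputable def nicholsonWeight (β u : ℝ) : ℝ :=
  cosh (β * arsinh u) / cosh (arsinh u)

theorem nicholsonWeight_zero (β : ℝ) : nicholsonWeight β 0 = 1 := by
  simp [nicholsonWeight]

theorem nicholsonWeight_nonneg (β u : ℝ) : 0 ≤ nicholsonWeight β u := by
  unfold nicholsonWeight
  positivity

theorem nicholsonWeight_le_one {β : ℝ} (hβ : |β| ≤ 1) (u : ℝ) : nicholsonWeight β u ≤ 1 :=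
  div_le_one_of_le₀ (cosh_mul_le_cosh hβ _) (cosh_pos _).le

theorem continuous_nicholsonWeight (β : ℝ) : Continuous (nicholsonWeight β) :=
  (continuous_cosh.comp (continuous_arsinh.const_mul β)).div
    (continuous_cosh.comp continuous_arsinh) fun _ => (cosh_pos _).ne'

theorem mul_besselJ_sq_add_besselY_sq {α : ℝ} (hα : |α| ≤ 1 / 2) {x : ℝ} (hx : 0 < x) :
    x * (besselJ α x ^ 2 + besselY α x ^ 2) = 4 / π ^ 2 *
      ∫ v in Set.Ioi 0, nicholsonWeight (2 * α) (v / (2 * x)) * besselKZero v := by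
  have h2x : 0 < 2 * x := by positivity
  rw [besselJ_sq_add_besselY_sq hα hx, ← integral_Ioi_comp_const_mul_sinh h2x
    fun v => nicholsonWeight (2 * α) (v / (2 * x)) * besselKZero v]
  have hintegrand (p : ℝ) : (2 * x * cosh p) •
      (nicholsonWeight (2 * α) (2 * x * sinh p / (2 * x)) * besselKZero (2 * x * sinh p)) =
      2 * x * (cosh (2 * α * p) * besselKZero (2 * x * sinh p)) := by
    have cosh_ne_zero := (cosh_pos p).ne'
    rw [mul_div_cancel_left₀ _ h2x.ne', nicholsonWeight, arsinh_sinh, smul_eq_mul]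
    field_simp
  simp only [hintegrand, integral_const_mul]
  ring

theorem norm_nicholsonWeight_mul_besselKZero_le {β : ℝ} (hβ : |β| ≤ 1) (u v : ℝ) :
    ‖nicholsonWeight β u * besselKZero v‖ ≤ besselKZero v := by
  rw [norm_of_nonneg (mul_nonneg (nicholsonWeight_nonneg β u) (besselKZero_nonneg v))]
  exact mul_le_of_le_one_left (besselKZero_nonneg v) (nicholsonWeight_le_one hβ u)

theorem aestronglyMeasurable_nicholsonWeight_mul_besselKZero (β x : ℝ) :
    AEStronglyMeasurable (fun v => nicholsonWeight β (v / x) * besselKZero v)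
      (volume.restrict (Set.Ioi 0)) :=
  ((continuous_nicholsonWeight β).comp (continuous_id.div_const x)).aestronglyMeasurable.mul
    integrableOn_besselKZero.aestronglyMeasurable

theorem integral_nicholsonWeight_mul_besselKZero_le {β : ℝ} (hβ : |β| ≤ 1) (x : ℝ) :
    ∫ v in Set.Ioi 0, nicholsonWeight β (v / x) * besselKZero v ≤ π / 2 := by
  have hbound := norm_nicholsonWeight_mul_besselKZero_le hβ
  rw [← integral_besselKZero]
  refine integral_mono (integrableOn_besselKZero.mono'
    (aestronglyMeasurable_nicholsonWeight_mul_besselKZero β x) (.of_forall fun v => hbound _ v))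
    integrableOn_besselKZero fun v => (le_norm_self _).trans (hbound _ v)

theorem tendsto_integral_nicholsonWeight_mul_besselKZero {β : ℝ} (hβ : |β| ≤ 1) :
    Tendsto (fun x => ∫ v in Set.Ioi 0, nicholsonWeight β (v / x) * besselKZero v) atTop
      (𝓝 (π / 2)) := by
  rw [← integral_besselKZero]
  refine tendsto_integral_filter_of_dominated_convergence _
    (.of_forall fun x => aestronglyMeasurable_nicholsonWeight_mul_besselKZero β x)
    (.of_forall fun x => .of_forall fun v => norm_nicholsonWeight_mul_besselKZero_le hβ _ v)
    integrableOn_besselKZero (.of_forall fun v => ?_)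
  have hweight := ((continuous_nicholsonWeight β).tendsto 0).comp
    (tendsto_const_nhds (x := v).div_atTop tendsto_id)
  simpa [nicholsonWeight_zero] using hweight.mul_const (besselKZero v)

theorem four_div_pi_sq_mul_pi_div_two : 4 / π ^ 2 * (π / 2) = 2 / π := by
  field_simp
  norm_num

theorem mul_besselJ_sq_add_besselY_sq_le {α : ℝ} (hα : |α| ≤ 1 / 2) {x : ℝ} (hx : 0 < x) :
    x * (besselJ α x ^ 2 + besselY α x ^ 2) ≤ 2 / π := by
  rw [mul_besselJ_sq_add_besselY_sq hα hx, ← four_div_pi_sq_mul_pi_div_two]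
  gcongr
  exact integral_nicholsonWeight_mul_besselKZero_le (abs_two_mul_le_one hα) (2 * x)

theorem tendsto_mul_besselJ_sq_add_besselY_sq {α : ℝ} (hα : |α| ≤ 1 / 2) :
    Tendsto (fun x => x * (besselJ α x ^ 2 + besselY α x ^ 2)) atTop (𝓝 (2 / π)) := by
  have hlim := ((tendsto_integral_nicholsonWeight_mul_besselKZero (abs_two_mul_le_one hα)).comp
    (tendsto_id.const_mul_atTop two_pos)).const_mul (4 / π ^ 2)
  rw [four_div_pi_sq_mul_pi_div_two] at hlim
  refine hlim.congr' ?_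
  filter_upwards [eventually_gt_atTop 0] with x hx
  exact (mul_besselJ_sq_add_besselY_sq hα hx).symm

end NicholsonFormula

theorem sup_x_mul_J_sq_add_Y_sq (α : ℝ) (hα : |α| ≤ 1 / 2) :
    IsLUB {y : ℝ | ∃ x > 0, y = x * ((besselJ α x) ^ 2 + (besselY α x) ^ 2)} (2 / π) ∧
      ∀ x > 0, 2 * x * |besselJ α x * besselY α x| ≤ 2 / π := by
  refine ⟨⟨?_, fun b hb => ?_⟩, fun x hx => ?_⟩
  · rintro _ ⟨x, hx, rfl⟩
    exact mul_besselJ_sq_add_besselY_sq_le hα hx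
  · refine le_of_tendsto (tendsto_mul_besselJ_sq_add_besselY_sq hα) ?_
    filter_upwards [eventually_gt_atTop 0] with x hx using hb ⟨x, hx, rfl⟩
  · calc 2 * x * |besselJ α x * besselY α x|
        = x * (2 * |besselJ α x| * |besselY α x|) := by rw [abs_mul]; ring
      _ ≤ x * (|besselJ α x| ^ 2 + |besselY α x| ^ 2) := by gcongr; exact two_mul_le_add_sq _ _
      _ = x * (besselJ α x ^ 2 + besselY α x ^ 2) := by rw [sq_abs, sq_abs]
      _ ≤ 2 / π := mul_besselJ_sq_add_besselY_sq_le hα hx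
end

section
/- For α ≥ -1/2 and x ≥ 1, |J_α(x)| ≤ (4/5)|α² − 1/4| + √(2/(πx)). -/
open Real MeasureTheory

/-!
The function `u x = √x * J_α(x)` solves Bessel's equation in Liouville normal form,
`u'' + (1 - m / x ^ 2) u = 0` with `m = α ^ 2 - 1 / 4`.

For `m ≤ 0` the energy `u ^ 2 + u' ^ 2 / (1 - m / x ^ 2)` increases with `x`, hence is at most its
value at infinity, which is the square of `A = limsup |u|`. So `|u| ≤ A` on `(0, ∞)`.

For `m ≥ 0` the energy `u' ^ 2 + (1 - m / x ^ 2) u ^ 2` increases, hence is at most `A ^ 2`. Beyond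
the turning point `√m` this bounds `|u'|` by `A`; before it `u u'` increases from `0`, so that
`u u'' ≥ 0` makes `|u'|` increase up to the turning point. Hence `|u'| ≤ A` and `|u x| ≤ A x`
everywhere, and combining this with the energy bound gives `|u x| ≤ A (1 + m √x)`.

Finally `A ≤ √(2 / π)`. For `α ≥ 1 / 2` move the segment `[0, 1]` in Poisson's integral to the
half-line `1 + i [0, ∞)`, where the integrand decays exponentially and is compared with Euler's
integral for `Γ(α + 1 / 2)`; the recurrence in `α` then reaches `α ≥ -1 / 2`.
-/

open Set Filter Topology

/-! ### Poisson's integral -/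

theorem factorial_mul_Gamma_add_half (k : ℕ) :
    (k.factorial : ℝ) * Gamma (k + 1 / 2) = (2 * k).factorial * √π / 4 ^ k := by
  have h := Real.Gamma_mul_Gamma_add_half (k + 1 / 2 : ℝ)
  rw [show (k : ℝ) + 1 / 2 + 1 / 2 = k + 1 by ring, Real.Gamma_nat_eq_factorial,
    show 2 * ((k : ℝ) + 1 / 2) = ((2 * k : ℕ) : ℝ) + 1 by push_cast; ring,
    Real.Gamma_nat_eq_factorial] at h
  rw [mul_comm, h, show (1 : ℝ) - (((2 * k : ℕ) : ℝ) + 1) = -((2 * k : ℕ) : ℝ) by ring,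
    Real.rpow_neg (by norm_num), Real.rpow_natCast, pow_mul,
    show (2 : ℝ) ^ 2 = 4 by norm_num]
  ring

theorem integral_Ioo_rpow_mul_one_sub_rpow {u v : ℝ} (hu : 0 < u) (hv : 0 < v) :
    ∫ s in Ioo (0 : ℝ) 1, s ^ (u - 1) * (1 - s) ^ (v - 1) =
      Gamma u * Gamma v / Gamma (u + v) := by
  have h := Complex.betaIntegral_eq_Gamma_mul_div u v (by simpa) (by simpa)
  rw [Complex.betaIntegral, intervalIntegral.integral_of_le zero_le_one,
    integral_Ioc_eq_integral_Ioo] at h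
  rw [← Complex.ofReal_inj, ← integral_complex_ofReal]
  push_cast
  rw [← Complex.Gamma_ofReal, ← Complex.Gamma_ofReal, ← Complex.Gamma_ofReal, Complex.ofReal_add,
    ← h]
  refine setIntegral_congr_fun measurableSet_Ioo fun s hs => ?_
  rw [Complex.ofReal_cpow hs.1.le, Complex.ofReal_cpow (by linarith [hs.2])]
  push_cast
  rfl

theorem image_sq_Ioo_zero_one : (fun t : ℝ => t ^ 2) '' Ioo 0 1 = Ioo 0 1 := by
  ext s
  constructor
  · rintro ⟨t, ht, rfl⟩
    exact ⟨pow_pos ht.1 2, pow_lt_one₀ ht.1.le ht.2 two_ne_zero⟩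
  · intro hs
    exact ⟨√s, ⟨Real.sqrt_pos.mpr hs.1, (Real.sqrt_lt' one_pos).mpr (by simpa using hs.2)⟩,
      Real.sq_sqrt hs.1.le⟩

theorem integral_one_sub_sq_rpow_mul_pow {a : ℝ} (ha : -1 < a) (k : ℕ) :
    ∫ t in (0 : ℝ)..1, (1 - t ^ 2) ^ a * t ^ (2 * k) =
      Gamma (k + 1 / 2) * Gamma (a + 1) / (2 * Gamma (k + a + 3 / 2)) := by
  have hsubst := integral_image_eq_integral_abs_deriv_smul (s := Ioo (0 : ℝ) 1)
    (f := fun t => t ^ 2) (f' := fun t => 2 * t) measurableSet_Ioo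
    (fun t _ => by simpa using (hasDerivAt_pow 2 t).hasDerivWithinAt)
    (fun t ht t' ht' h => (pow_left_inj₀ ht.1.le ht'.1.le two_ne_zero).mp h)
    (fun s => s ^ ((k : ℝ) + 1 / 2 - 1) * (1 - s) ^ (a + 1 - 1))
  have hpow : ∀ t : ℝ, 0 < t → t * (t ^ 2) ^ ((k : ℝ) + 1 / 2 - 1) = t ^ (2 * k) := fun t ht => by
    calc t * (t ^ 2) ^ ((k : ℝ) + 1 / 2 - 1) = t ^ (1 : ℝ) * t ^ (2 * ((k : ℝ) + 1 / 2 - 1)) := by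
          rw [Real.rpow_one, Real.rpow_mul ht.le, Real.rpow_two]
      _ = t ^ ((2 * k : ℕ) : ℝ) := by
          rw [← Real.rpow_add ht]
          push_cast
          ring_nf
      _ = t ^ (2 * k) := Real.rpow_natCast t (2 * k)
  have hcongr : ∫ t in Ioo (0 : ℝ) 1,
      |2 * t| • ((t ^ 2) ^ ((k : ℝ) + 1 / 2 - 1) * (1 - t ^ 2) ^ (a + 1 - 1)) =
        2 * ∫ t in Ioo (0 : ℝ) 1, (1 - t ^ 2) ^ a * t ^ (2 * k) := by
    rw [← integral_const_mul]
    refine setIntegral_congr_fun measurableSet_Ioo fun t ht => ?_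
    rw [smul_eq_mul, add_sub_cancel_right, abs_of_pos (mul_pos two_pos ht.1), ← hpow t ht.1]
    ring
  rw [image_sq_Ioo_zero_one, hcongr, integral_Ioo_rpow_mul_one_sub_rpow (by positivity)
    (by linarith), show (k : ℝ) + 1 / 2 + (a + 1) = k + a + 3 / 2 by ring] at hsubst
  rw [intervalIntegral.integral_of_le zero_le_one, integral_Ioc_eq_integral_Ioo,
    mul_comm (2 : ℝ), ← div_div, hsubst]
  ring

theorem intervalIntegrable_one_sub_sq_rpow {a : ℝ} (ha : -1 < a) :
    IntervalIntegrable (fun t : ℝ => (1 - t ^ 2) ^ a) volume 0 1 := by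
  have h := ((intervalIntegral.intervalIntegrable_rpow' (a := 0) (b := 1) ha).comp_sub_left 1).symm
  rw [sub_zero, sub_self] at h
  have h2 := h.mul_continuousOn (g := fun t : ℝ => (1 + t) ^ a) (by
    refine ContinuousOn.rpow_const (by fun_prop) fun t ht => Or.inl ?_
    rw [uIcc_of_le zero_le_one] at ht
    linarith [ht.1])
  refine h2.congr fun t ht => ?_
  rw [uIoc_of_le zero_le_one] at ht
  rw [← Real.mul_rpow (by linarith [ht.2]) (by linarith [ht.1])]
  ring_nf

theorem hasSum_integral_one_sub_sq_rpow_mul_cos {a : ℝ} (ha : -1 < a) (x : ℝ) :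
    HasSum (fun k : ℕ => (-1) ^ k * x ^ (2 * k) / (2 * k).factorial *
        ∫ t in (0 : ℝ)..1, (1 - t ^ 2) ^ a * t ^ (2 * k))
      (∫ t in (0 : ℝ)..1, (1 - t ^ 2) ^ a * cos (x * t)) := by
  have hterm : ∀ (k : ℕ) (t : ℝ), (1 - t ^ 2) ^ a * ((-1) ^ k * (x * t) ^ (2 * k) /
      (2 * k).factorial) = (-1) ^ k * x ^ (2 * k) / (2 * k).factorial *
        ((1 - t ^ 2) ^ a * t ^ (2 * k)) := fun k t => by
    rw [mul_pow]
    ring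
  have hbound : ∀ (k : ℕ) (t : ℝ), t ∈ Ioc (0 : ℝ) 1 →
      ‖(1 - t ^ 2) ^ a * ((-1) ^ k * (x * t) ^ (2 * k) / (2 * k).factorial)‖ ≤
        (1 - t ^ 2) ^ a * (|x| ^ (2 * k) / (2 * k).factorial) := fun k t ht => by
    have h0 : 0 ≤ 1 - t ^ 2 := by nlinarith [ht.1, ht.2]
    rw [norm_mul, Real.norm_of_nonneg (by positivity), norm_div, norm_mul, norm_pow, norm_neg,
      norm_one, one_pow, one_mul, norm_pow, Real.norm_natCast, Real.norm_eq_abs, abs_mul]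
    gcongr
    exact mul_le_of_le_one_right (abs_nonneg x) (by rw [abs_of_pos ht.1]; exact ht.2)
  have hsummable : Summable fun k : ℕ => |x| ^ (2 * k) / ((2 * k).factorial : ℝ) :=
    (Real.summable_pow_div_factorial |x|).comp_injective (mul_right_injective₀ two_ne_zero)
  simp only [← intervalIntegral.integral_const_mul, ← hterm]
  refine intervalIntegral.hasSum_integral_of_dominated_convergence
    (fun (k : ℕ) t => (1 - t ^ 2) ^ a * (|x| ^ (2 * k) / (2 * k).factorial))
    (fun k => by measurability) (fun k => Eventually.of_forall fun t ht => hbound k t ?_)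
    (Eventually.of_forall fun t _ => hsummable.mul_left _) ?_
    (Eventually.of_forall fun t _ => (Real.hasSum_cos (x * t)).mul_left _)
  · rwa [uIoc_of_le zero_le_one] at ht
  · simp_rw [tsum_mul_left]
    exact (intervalIntegrable_one_sub_sq_rpow ha).mul_const _

theorem besselJ_eq_poisson_integral {α x : ℝ} (hα : -(1 / 2) < α) (hx : 0 < x) :
    besselJ α x = 2 * (x / 2) ^ α / (√π * Gamma (α + 1 / 2)) *
      ∫ t in (0 : ℝ)..1, (1 - t ^ 2) ^ (α - 1 / 2) * cos (x * t) := by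
  have ha : -1 < α - 1 / 2 := by linarith
  rw [besselJ, ← (hasSum_integral_one_sub_sq_rpow_mul_cos ha x).tsum_eq, ← tsum_mul_left]
  refine tsum_congr fun k => ?_
  have hfac : ((2 * k).factorial : ℝ) = k.factorial * Gamma (k + 1 / 2) * 4 ^ k / √π := by
    rw [factorial_mul_Gamma_add_half]
    field_simp
  have hpow : (x / 2) ^ (2 * (k : ℝ) + α) = (x / 2) ^ α * x ^ (2 * k) / 4 ^ k := by
    rw [Real.rpow_add (by positivity), show 2 * (k : ℝ) = ((2 * k : ℕ) : ℝ) by push_cast; rfl,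
      Real.rpow_natCast, div_pow, pow_mul (2 : ℝ) 2 k, show (2 : ℝ) ^ 2 = 4 by norm_num]
    ring
  rw [integral_one_sub_sq_rpow_mul_pow ha, hfac, hpow,
    show (k : ℝ) + (α - 1 / 2) + 3 / 2 = k + α + 1 by ring,
    show α - 1 / 2 + 1 = α + 1 / 2 by ring]
  have h1 := Gamma_pos_of_pos (show 0 < (k : ℝ) + α + 1 by linarith [Nat.cast_nonneg (α := ℝ) k])
  have h2 := Gamma_pos_of_pos (show 0 < (k : ℝ) + 1 / 2 by positivity)
  have h3 := Gamma_pos_of_pos (show 0 < α + 1 / 2 by linarith)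
  generalize Gamma (k + α + 1) = g₁ at *
  generalize Gamma (k + 1 / 2) = g₂ at *
  generalize Gamma (α + 1 / 2) = g₃ at *
  field_simp

/-! ### The contour shift -/

/-- The integrand `(1 - z ^ 2) ^ a * exp (i x z)` of the complexified Poisson integral, with the
principal branch of the power. -/
noncomputable def besselKernel (a x : ℝ) (z : ℂ) : ℂ :=
  (1 - z ^ 2) ^ (a : ℂ) * Complex.exp (Complex.I * x * z)

theorem one_sub_sq_re (z : ℂ) : (1 - z ^ 2).re = 1 - z.re ^ 2 + z.im ^ 2 := by
  simp only [pow_two, Complex.sub_re, Complex.one_re, Complex.mul_re]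
  ring

theorem norm_besselKernel (a x u v : ℝ) :
    ‖besselKernel a x (u + v * Complex.I)‖ =
      ‖1 - ((u : ℂ) + v * Complex.I) ^ 2‖ ^ a * exp (-(x * v)) := by
  rw [besselKernel, norm_mul, Complex.norm_cpow_real, Complex.norm_exp]
  simp

theorem besselKernel_imag_axis (a x v : ℝ) :
    besselKernel a x (v * Complex.I) = ((1 + v ^ 2) ^ a * exp (-(x * v)) : ℝ) := by
  rw [besselKernel, Complex.ofReal_mul, Complex.ofReal_cpow (by positivity), Complex.ofReal_exp]
  congr 2
  · rw [mul_pow, Complex.I_sq]; push_cast; ring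
  · push_cast
    linear_combination (x * v : ℂ) * Complex.I_mul_I

theorem re_besselKernel_ofReal (a x : ℝ) {t : ℝ} (ht : t ∈ Icc (0 : ℝ) 1) :
    (besselKernel a x t).re = (1 - t ^ 2) ^ a * cos (x * t) := by
  have h : (1 - (t : ℂ) ^ 2) ^ (a : ℂ) = ((1 - t ^ 2) ^ a : ℝ) := by
    rw [Complex.ofReal_cpow (by nlinarith [ht.1, ht.2])]
    push_cast
    rfl
  rw [besselKernel, h, Complex.re_ofReal_mul,
    show Complex.I * x * t = ((x * t : ℝ) : ℂ) * Complex.I by push_cast; ring,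
    Complex.exp_ofReal_mul_I_re]

theorem continuousOn_besselKernel {a : ℝ} (ha : 0 ≤ a) (x : ℝ) :
    ContinuousOn (besselKernel a x) {z | z.re ∈ Icc 0 1} := by
  unfold besselKernel
  refine ContinuousOn.mul (fun z hz => ContinuousAt.continuousWithinAt ?_) (by fun_prop)
  rcases ha.eq_or_lt with rfl | ha
  · simpa using continuousAt_const
  · have hre : 0 ≤ (1 - z ^ 2).re := by
      rw [one_sub_sq_re]
      nlinarith [hz.1, hz.2, sq_nonneg z.im]
    exact ContinuousAt.comp (f := fun z : ℂ => 1 - z ^ 2)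
      (Complex.continuousAt_cpow_const_of_re_pos (Or.inl hre) (by simpa using ha)) (by fun_prop)

theorem differentiableOn_besselKernel (a x : ℝ) :
    DifferentiableOn ℂ (besselKernel a x) {z | z.re ∈ Ioo 0 1} := by
  unfold besselKernel
  refine DifferentiableOn.mul (fun z hz => DifferentiableAt.differentiableWithinAt ?_)
    (by fun_prop)
  refine DifferentiableAt.cpow_const (f := fun z : ℂ => 1 - z ^ 2) (by fun_prop) (Or.inl ?_)
  rw [one_sub_sq_re]
  nlinarith [hz.1, hz.2, sq_nonneg z.im]

theorem integral_besselKernel_eq {a : ℝ} (ha : 0 ≤ a) (x T : ℝ) :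
    ∫ t in (0 : ℝ)..1, besselKernel a x t =
      (∫ t in (0 : ℝ)..1, besselKernel a x (t + T * Complex.I)) -
        Complex.I * (∫ v in (0 : ℝ)..T, besselKernel a x (1 + v * Complex.I)) +
        Complex.I * ∫ v in (0 : ℝ)..T, besselKernel a x (v * Complex.I) := by
  have hrect := Complex.integral_boundary_rect_eq_zero_of_continuousOn_of_differentiableOn
    (besselKernel a x) 0 (1 + T * Complex.I)
    ((continuousOn_besselKernel ha x).mono fun z hz => by
      simpa [uIcc_of_le] using hz.1)
    ((differentiableOn_besselKernel a x).mono fun z hz => by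
      simpa using hz.1)
  simp only [Complex.zero_re, Complex.zero_im, Complex.add_re, Complex.add_im, Complex.one_re,
    Complex.one_im, Complex.re_ofReal_mul, Complex.im_ofReal_mul, Complex.I_re, Complex.I_im,
    mul_zero, mul_one, add_zero, zero_add, Complex.ofReal_zero, Complex.ofReal_one, zero_mul,
    smul_eq_mul] at hrect
  linear_combination hrect

theorem re_integral_besselKernel_ofReal {a : ℝ} (ha : 0 ≤ a) (x : ℝ) :
    (∫ t in (0 : ℝ)..1, besselKernel a x t).re =
      ∫ t in (0 : ℝ)..1, (1 - t ^ 2) ^ a * cos (x * t) := by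
  have h_int : IntervalIntegrable (fun t : ℝ => besselKernel a x t) volume 0 1 :=
    ContinuousOn.intervalIntegrable ((continuousOn_besselKernel ha x).comp
      Complex.continuous_ofReal.continuousOn fun t ht => by
        simpa [uIcc_of_le] using ht)
  rw [← Complex.reCLM_apply, ← ContinuousLinearMap.intervalIntegral_comp_comm _ h_int]
  refine intervalIntegral.integral_congr fun t ht => re_besselKernel_ofReal a x ?_
  rwa [uIcc_of_le zero_le_one] at ht

theorem integral_one_sub_sq_rpow_mul_cos_eq {a : ℝ} (ha : 0 ≤ a) (x T : ℝ) :
    ∫ t in (0 : ℝ)..1, (1 - t ^ 2) ^ a * cos (x * t) =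
      (∫ t in (0 : ℝ)..1, besselKernel a x (t + T * Complex.I)).re +
        (∫ v in (0 : ℝ)..T, besselKernel a x (1 + v * Complex.I)).im := by
  -- The edge on the imaginary axis drops out because the kernel is real there.
  have himag : (∫ v in (0 : ℝ)..T, besselKernel a x (v * Complex.I)).im = 0 := by
    simp only [besselKernel_imag_axis, intervalIntegral.integral_ofReal, Complex.ofReal_im]
  rw [← re_integral_besselKernel_ofReal ha, integral_besselKernel_eq ha x T, Complex.add_re,
    Complex.sub_re, Complex.I_mul_re, Complex.I_mul_re, himag]
  ring

theorem norm_besselKernel_one_add_le {a x v : ℝ} (ha : 0 ≤ a) (hv : 0 ≤ v) :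
    ‖besselKernel a x (1 + v * Complex.I)‖ ≤ 2 ^ a * (v ^ a * exp (-((x - a / 2) * v))) := by
  have h := norm_besselKernel a x 1 v
  rw [Complex.ofReal_one] at h
  have hbase : ‖1 - (1 + (v : ℂ) * Complex.I) ^ 2‖ ≤ 2 * v * exp (v / 2) := by
    calc ‖1 - (1 + (v : ℂ) * Complex.I) ^ 2‖ = ‖(v : ℂ) * (v - 2 * Complex.I)‖ := by
          congr 1
          linear_combination (-v ^ 2 : ℂ) * Complex.I_sq
      _ ≤ v * (v + 2) := by
          rw [norm_mul, Complex.norm_of_nonneg hv]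
          gcongr
          refine (norm_sub_le _ _).trans_eq ?_
          simp [abs_of_nonneg hv]
      _ = 2 * v * (v / 2 + 1) := by ring
      _ ≤ 2 * v * exp (v / 2) := by
          gcongr
          exact add_one_le_exp _
  calc ‖besselKernel a x (1 + v * Complex.I)‖
      ≤ (2 * v * exp (v / 2)) ^ a * exp (-(x * v)) := by rw [h]; gcongr
    _ = 2 ^ a * (v ^ a * (exp (v / 2 * a) * exp (-(x * v)))) := by
      rw [Real.mul_rpow (by positivity) (by positivity), Real.mul_rpow (by norm_num) hv,
        ← Real.exp_mul]
      ring
    _ = 2 ^ a * (v ^ a * exp (-((x - a / 2) * v))) := by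
      rw [← Real.exp_add]
      ring_nf

theorem norm_integral_besselKernel_one_add_le {a x T : ℝ} (ha : 0 ≤ a) (hx : a / 2 < x)
    (hT : 0 ≤ T) :
    ‖∫ v in (0 : ℝ)..T, besselKernel a x (1 + v * Complex.I)‖ ≤
      2 ^ a * ((1 / (x - a / 2)) ^ (a + 1) * Gamma (a + 1)) := by
  have hr : 0 < x - a / 2 := sub_pos.mpr hx
  have hexp : IntegrableOn (fun v : ℝ => v ^ a * exp (-((x - a / 2) * v))) (Ioi 0) := by
    simpa only [Real.rpow_one, neg_mul] using
      integrableOn_rpow_mul_exp_neg_mul_rpow (by linarith : -1 < a) one_pos hr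
  have hI : IntegrableOn (fun v : ℝ => 2 ^ a * (v ^ a * exp (-((x - a / 2) * v)))) (Ioi 0) :=
    hexp.const_mul _
  have hGamma := Real.integral_rpow_mul_exp_neg_mul_Ioi (a := a + 1) (by linarith) hr
  rw [add_sub_cancel_right] at hGamma
  rw [← hGamma, ← integral_const_mul]
  refine (intervalIntegral.norm_integral_le_of_norm_le hT
    (Eventually.of_forall fun v hv => norm_besselKernel_one_add_le ha hv.1.le)
    ((intervalIntegrable_iff_integrableOn_Ioc_of_le hT).mpr
      (hI.mono_set Ioc_subset_Ioi_self))).trans ?_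
  rw [intervalIntegral.integral_of_le hT]
  refine setIntegral_mono_set hI ?_ Ioc_subset_Ioi_self.eventuallyLE
  filter_upwards [ae_restrict_mem measurableSet_Ioi] with v (hv : 0 < v)
  positivity

theorem norm_integral_besselKernel_add_mul_I_le {a x T : ℝ} (ha : 0 ≤ a) (hT : 2 ≤ T) :
    ‖∫ t in (0 : ℝ)..1, besselKernel a x (t + T * Complex.I)‖ ≤
      2 ^ a * (T ^ (2 * a) * exp (-x * T)) := by
  have hT0 : 0 ≤ T := by linarith
  have hbase : ∀ t ∈ Ioc (0 : ℝ) 1,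
      ‖1 - ((t : ℂ) + T * Complex.I) ^ 2‖ ≤ 2 * T ^ 2 := fun t ht => by
    calc ‖1 - ((t : ℂ) + T * Complex.I) ^ 2‖
        ≤ ‖(1 : ℂ)‖ + ‖((t : ℂ) + T * Complex.I) ^ 2‖ := norm_sub_le _ _
      _ = 1 + (t ^ 2 + T ^ 2) := by
        rw [norm_one, norm_pow, ← Complex.normSq_eq_norm_sq, Complex.normSq_add_mul_I]
      _ ≤ 2 * T ^ 2 := by nlinarith [ht.1, ht.2]
  refine (intervalIntegral.norm_integral_le_of_norm_le_const fun t ht => ?_).trans_eq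
    (by rw [sub_zero, abs_one, mul_one])
  rw [uIoc_of_le zero_le_one] at ht
  calc ‖besselKernel a x (t + T * Complex.I)‖ ≤ (2 * T ^ 2) ^ a * exp (-(x * T)) := by
        rw [norm_besselKernel]
        gcongr
        exact hbase t ht
    _ = 2 ^ a * (T ^ (2 * a) * exp (-x * T)) := by
        rw [Real.mul_rpow (by norm_num) (by positivity), ← Real.rpow_natCast T 2,
          ← Real.rpow_mul hT0, neg_mul, mul_assoc, Nat.cast_ofNat]

theorem abs_integral_one_sub_sq_rpow_mul_cos_le {a x : ℝ} (ha : 0 ≤ a) (hx : a / 2 < x) :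
    |∫ t in (0 : ℝ)..1, (1 - t ^ 2) ^ a * cos (x * t)| ≤
      2 ^ a * ((1 / (x - a / 2)) ^ (a + 1) * Gamma (a + 1)) := by
  have hlim := ((tendsto_rpow_mul_exp_neg_mul_atTop_nhds_zero (2 * a) x
    (by linarith)).const_mul (2 ^ a)).add_const
      (2 ^ a * ((1 / (x - a / 2)) ^ (a + 1) * Gamma (a + 1)))
  rw [mul_zero, zero_add] at hlim
  refine ge_of_tendsto hlim ?_
  filter_upwards [eventually_ge_atTop 2] with T hT
  have hT0 : 0 ≤ T := by linarith
  rw [integral_one_sub_sq_rpow_mul_cos_eq ha x T]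
  exact (abs_add_le _ _).trans (add_le_add
    ((Complex.abs_re_le_norm _).trans (norm_integral_besselKernel_add_mul_I_le ha hT))
    ((Complex.abs_im_le_norm _).trans (norm_integral_besselKernel_one_add_le ha hx hT0)))

/-! ### Bessel's equation in Liouville normal form -/

/-- `u` is a solution on `(0, ∞)` of `u'' + (1 - m / x ^ 2) u = 0`, with derivative `v`. This is
Bessel's equation of order `α` in Liouville normal form, for `u x = √x * J_α x` and
`m = α ^ 2 - 1 / 4`. -/
structure IsLiouvilleBesselSolution (m : ℝ) (u v : ℝ → ℝ) : Prop where
  hasDerivAt : ∀ x, 0 < x → HasDerivAt u (v x) x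
  hasDerivAt_deriv : ∀ x, 0 < x → HasDerivAt v (-((1 - m / x ^ 2) * u x)) x

theorem monotoneOn_of_hasDerivAt_nonneg {f f' : ℝ → ℝ} {s : Set ℝ} (hs : Convex ℝ s)
    (hf : ∀ x ∈ s, HasDerivAt f (f' x) x) (hf' : ∀ x ∈ s, 0 ≤ f' x) : MonotoneOn f s :=
  monotoneOn_of_hasDerivWithinAt_nonneg hs
    (fun x hx => (hf x hx).continuousAt.continuousWithinAt)
    (fun x hx => (hf x (interior_subset hx)).hasDerivWithinAt)
    fun x hx => hf' x (interior_subset hx)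

theorem hasDerivAt_one_sub_div_sq (m : ℝ) {x : ℝ} (hx : x ≠ 0) :
    HasDerivAt (fun x : ℝ => 1 - m / x ^ 2) (2 * m / x ^ 3) x := by
  refine (((hasDerivAt_const x m).div (hasDerivAt_pow 2 x) (by positivity)).const_sub 1).congr_deriv
    ?_
  field_simp
  ring

/-- A bounded `u` has points arbitrarily far out at which `u'` is small, and there
`u ^ 2 + u' ^ 2` is controlled by `u` alone. -/
theorem le_sq_of_monotoneOn_of_le_sq_add_sq {F u v : ℝ → ℝ} {A : ℝ}
    (hu : ∀ x, 0 < x → HasDerivAt u (v x) x) (hF : MonotoneOn F (Ioi 0))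
    (hFuv : ∀ x, 0 < x → F x ≤ u x ^ 2 + v x ^ 2)
    (hlim : ∀ B, A < B → ∀ᶠ x in atTop, |u x| ≤ B) {x : ℝ} (hx : 0 < x) : F x ≤ A ^ 2 := by
  have hB : ∀ B, A < B → F x ≤ B ^ 2 := fun B hAB => by
    have hdecay : Tendsto (fun X : ℝ => B ^ 2 + (2 * B / X) ^ 2) atTop (𝓝 (B ^ 2 + 0 ^ 2)) :=
      ((tendsto_id.const_div_atTop (2 * B)).pow 2).const_add _
    rw [zero_pow two_ne_zero, add_zero] at hdecay
    obtain ⟨X₀, hX₀⟩ := eventually_atTop.mp (hlim B hAB)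
    refine ge_of_tendsto hdecay ?_
    filter_upwards [eventually_ge_atTop x, eventually_ge_atTop X₀] with X hxX hX₀X
    have hX : 0 < X := hx.trans_le hxX
    obtain ⟨ξ, hξ, hslope⟩ := exists_hasDerivAt_eq_slope u v (by linarith : X < 2 * X)
      (fun y hy => (hu y (hX.trans_le hy.1)).continuousAt.continuousWithinAt)
      fun y hy => hu y (hX.trans hy.1)
    have hvξ : |v ξ| ≤ 2 * B / X := by
      rw [hslope, show 2 * X - X = X by ring, abs_div, abs_of_pos hX]
      gcongr
      calc |u (2 * X) - u X| ≤ |u (2 * X)| + |u X| := abs_sub _ _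
        _ ≤ B + B := add_le_add (hX₀ _ (by linarith)) (hX₀ _ hX₀X)
        _ = 2 * B := by ring
    calc F x ≤ F ξ := hF hx (hX.trans hξ.1) (hxX.trans hξ.1.le)
      _ ≤ u ξ ^ 2 + v ξ ^ 2 := hFuv ξ (hX.trans hξ.1)
      _ ≤ B ^ 2 + (2 * B / X) ^ 2 := by
        rw [← sq_abs (u ξ), ← sq_abs (v ξ)]
        gcongr
        exact hX₀ ξ (hX₀X.trans hξ.1.le)
  have hsq : Tendsto (fun B : ℝ => B ^ 2) (𝓝[>] A) (𝓝 (A ^ 2)) :=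
    ((continuous_pow 2).tendsto A).mono_left nhdsWithin_le_nhds
  refine ge_of_tendsto hsq ?_
  filter_upwards [self_mem_nhdsWithin] with B hAB using hB B hAB

theorem abs_le_mul_one_add_mul_sqrt {A m x u : ℝ} (hA : 0 ≤ A) (hm : 0 ≤ m) (hx : 0 < x)
    (hu : |u| ≤ A * x) (hq : (1 - m / x ^ 2) * u ^ 2 ≤ A ^ 2) : |u| ≤ A * (1 + m * √x) := by
  rcases le_total x 1 with hx1 | hx1
  · exact hu.trans (mul_le_mul_of_nonneg_left (by nlinarith [Real.sqrt_nonneg x]) hA)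
  have hm_le : m ≤ m * √x := le_mul_of_one_le_right hm (Real.one_le_sqrt.mpr hx1)
  rcases le_total (x ^ 2) (2 * m) with hxm | hxm
  · exact hu.trans (mul_le_mul_of_nonneg_left (by nlinarith [sq_nonneg (x - 1)]) hA)
  · set y := m / x ^ 2 with hy
    have hy0 : 0 ≤ y := by positivity
    have hy2 : y ≤ 1 / 2 := by
      rw [hy, div_le_iff₀ (by positivity)]
      linarith
    have hym : y ≤ m := div_le_self hm (one_le_pow₀ hx1)
    have hy_inv : 1 ≤ (1 - y) * (1 + y) ^ 2 := by nlinarith [mul_nonneg hy0 hy0]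
    have hu_y : |u| ≤ A * (1 + y) := by
      refine abs_le_of_sq_le_sq ?_ (by positivity)
      calc u ^ 2 ≤ u ^ 2 * ((1 - y) * (1 + y) ^ 2) := le_mul_of_one_le_right (sq_nonneg u) hy_inv
        _ = (1 - y) * u ^ 2 * (1 + y) ^ 2 := by ring
        _ ≤ A ^ 2 * (1 + y) ^ 2 := by gcongr
        _ = (A * (1 + y)) ^ 2 := by ring
    exact hu_y.trans (mul_le_mul_of_nonneg_left (by linarith) hA)

namespace IsLiouvilleBesselSolution

variable {m A : ℝ} {u v : ℝ → ℝ}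

theorem monotoneOn_sq_add_mul_sq (h : IsLiouvilleBesselSolution m u v) (hm : 0 ≤ m) :
    MonotoneOn (fun x => v x ^ 2 + (1 - m / x ^ 2) * u x ^ 2) (Ioi 0) := by
  refine monotoneOn_of_hasDerivAt_nonneg (f' := fun x => 2 * m / x ^ 3 * u x ^ 2) (convex_Ioi 0)
    (fun x hx => ?_) fun x (hx : 0 < x) => by positivity
  refine (((h.hasDerivAt_deriv x hx).pow 2).add ((hasDerivAt_one_sub_div_sq m hx.ne').mul
    ((h.hasDerivAt x hx).pow 2))).congr_deriv ?_
  simp only [Pi.pow_apply]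
  ring

theorem monotoneOn_sq_add_sq_div (h : IsLiouvilleBesselSolution m u v) (hm : m ≤ 0) :
    MonotoneOn (fun x => u x ^ 2 + v x ^ 2 / (1 - m / x ^ 2)) (Ioi 0) := by
  refine monotoneOn_of_hasDerivAt_nonneg
    (f' := fun x => -(2 * m) / x ^ 3 * (v x / (1 - m / x ^ 2)) ^ 2) (convex_Ioi 0)
    (fun x (hx : 0 < x) => ?_) fun x (hx : 0 < x) => ?_
  · have hq : 1 - m / x ^ 2 ≠ 0 := by
      have : m / x ^ 2 ≤ 0 := div_nonpos_of_nonpos_of_nonneg hm (by positivity)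
      linarith
    refine (((h.hasDerivAt x hx).pow 2).add (((h.hasDerivAt_deriv x hx).pow 2).div
      (hasDerivAt_one_sub_div_sq m hx.ne') hq)).congr_deriv ?_
    simp only [Pi.pow_apply]
    generalize 1 - m / x ^ 2 = q at hq
    field_simp
    ring
  · have : 0 ≤ -(2 * m) := by linarith
    positivity

theorem sq_add_mul_sq_le (h : IsLiouvilleBesselSolution m u v) (hm : 0 ≤ m)
    (hlim : ∀ B, A < B → ∀ᶠ x in atTop, |u x| ≤ B) {x : ℝ} (hx : 0 < x) :
    v x ^ 2 + (1 - m / x ^ 2) * u x ^ 2 ≤ A ^ 2 := by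
  refine le_sq_of_monotoneOn_of_le_sq_add_sq h.hasDerivAt (h.monotoneOn_sq_add_mul_sq hm)
    (fun y hy => ?_) hlim hx
  have : 0 ≤ m / y ^ 2 * u y ^ 2 := by positivity
  linarith

theorem abs_le_of_nonpos (h : IsLiouvilleBesselSolution m u v) (hm : m ≤ 0) (hA : 0 ≤ A)
    (hlim : ∀ B, A < B → ∀ᶠ x in atTop, |u x| ≤ B) {x : ℝ} (hx : 0 < x) : |u x| ≤ A := by
  have hq : ∀ y : ℝ, 1 ≤ 1 - m / y ^ 2 := fun y => by
    linarith [div_nonpos_of_nonpos_of_nonneg hm (sq_nonneg y)]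
  refine abs_le_of_sq_le_sq ?_ hA
  calc u x ^ 2 ≤ u x ^ 2 + v x ^ 2 / (1 - m / x ^ 2) :=
        le_add_of_nonneg_right (div_nonneg (sq_nonneg _) (zero_le_one.trans (hq x)))
    _ ≤ A ^ 2 :=
        le_sq_of_monotoneOn_of_le_sq_add_sq h.hasDerivAt (h.monotoneOn_sq_add_sq_div hm)
          (fun y _ => by gcongr; exact div_le_self (sq_nonneg _) (hq y)) hlim hx

theorem mul_nonneg_of_sq_le (h : IsLiouvilleBesselSolution m u v)
    (huv : Tendsto (fun x => u x * v x) (𝓝[>] 0) (𝓝 0)) {x : ℝ} (hx : 0 < x) (hxm : x ^ 2 ≤ m) :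
    0 ≤ u x * v x := by
  have hmono : MonotoneOn (fun y => u y * v y) (Ioc 0 x) := by
    refine monotoneOn_of_hasDerivAt_nonneg (convex_Ioc 0 x)
      (fun y hy => (h.hasDerivAt y hy.1).mul (h.hasDerivAt_deriv y hy.1)) fun y hy => ?_
    have hq : 1 - m / y ^ 2 ≤ 0 := by
      rw [sub_nonpos, one_le_div (by have := hy.1; positivity)]
      exact (pow_le_pow_left₀ hy.1.le hy.2 2).trans hxm
    nlinarith [sq_nonneg (v y), mul_nonneg (neg_nonneg.mpr hq) (sq_nonneg (u y))]
  refine le_of_tendsto huv ?_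
  filter_upwards [Ioc_mem_nhdsGT hx] with y hy using hmono hy ⟨hx, le_rfl⟩ hy.2

theorem abs_deriv_le (h : IsLiouvilleBesselSolution m u v) (hm : 0 ≤ m) (hA : 0 ≤ A)
    (hlim : ∀ B, A < B → ∀ᶠ x in atTop, |u x| ≤ B)
    (huv : Tendsto (fun x => u x * v x) (𝓝[>] 0) (𝓝 0)) {x : ℝ} (hx : 0 < x) : |v x| ≤ A := by
  have h_right : ∀ y, 0 < y → m ≤ y ^ 2 → v y ^ 2 ≤ A ^ 2 := fun y hy hmy => by
    have hq : 0 ≤ 1 - m / y ^ 2 := sub_nonneg.mpr (div_le_one_of_le₀ hmy (sq_nonneg y))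
    linarith [h.sq_add_mul_sq_le hm hlim hy, mul_nonneg hq (sq_nonneg (u y))]
  refine abs_le_of_sq_le_sq ?_ hA
  -- `v ^ 2` increases up to the turning point `√m`, beyond which the energy controls it.
  rcases le_total m (x ^ 2) with hmx | hxm
  · exact h_right x hx hmx
  have hxs : x ≤ √m := Real.le_sqrt_of_sq_le hxm
  have hs : 0 < √m := hx.trans_le hxs
  have hmono : MonotoneOn (fun y => v y ^ 2) (Ioc 0 √m) := by
    refine monotoneOn_of_hasDerivAt_nonneg
      (f' := fun y => 2 * ((m / y ^ 2 - 1) * (u y * v y))) (convex_Ioc 0 _)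
      (fun y hy => ((h.hasDerivAt_deriv y hy.1).pow 2).congr_deriv (by push_cast; ring))
      fun y hy => ?_
    have hym : y ^ 2 ≤ m := (Real.le_sqrt hy.1.le hm).mp hy.2
    have hq : 0 ≤ m / y ^ 2 - 1 := by
      rw [sub_nonneg, one_le_div (by have := hy.1; positivity)]
      exact hym
    exact mul_nonneg two_pos.le (mul_nonneg hq (h.mul_nonneg_of_sq_le huv hy.1 hym))
  exact (hmono ⟨hx, hxs⟩ ⟨hs, le_rfl⟩ hxs).trans (h_right _ hs (Real.sq_sqrt hm).ge)

theorem abs_le_mul_self (h : IsLiouvilleBesselSolution m u v) (hm : 0 ≤ m) (hA : 0 ≤ A)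
    (hlim : ∀ B, A < B → ∀ᶠ x in atTop, |u x| ≤ B) (hu : Tendsto u (𝓝[>] 0) (𝓝 0))
    (huv : Tendsto (fun x => u x * v x) (𝓝[>] 0) (𝓝 0)) {x : ℝ} (hx : 0 < x) :
    |u x| ≤ A * x := by
  have hlim0 : Tendsto (fun y => |u x - u y|) (𝓝[>] 0) (𝓝 |u x - 0|) := (hu.const_sub _).abs
  rw [sub_zero] at hlim0
  refine le_of_tendsto hlim0 ?_
  filter_upwards [Ioc_mem_nhdsGT hx] with y hy
  have hmvt : ‖u x - u y‖ ≤ A * ‖x - y‖ :=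
    (convex_Ioi (0 : ℝ)).norm_image_sub_le_of_norm_hasDerivWithin_le
      (fun z hz => (h.hasDerivAt z hz).hasDerivWithinAt)
      (fun z hz => h.abs_deriv_le hm hA hlim huv hz) hy.1 hx
  rw [Real.norm_eq_abs, Real.norm_of_nonneg (sub_nonneg.mpr hy.2)] at hmvt
  exact hmvt.trans (mul_le_mul_of_nonneg_left (by linarith [hy.1]) hA)

end IsLiouvilleBesselSolution

/-! ### The power series and its recurrences -/

theorem one_le_Gamma {y : ℝ} (hy : 2 ≤ y) : 1 ≤ Gamma y := by
  rw [← Real.Gamma_two]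
  exact Real.Gamma_strictMonoOn_Ici.monotoneOn (by simp) hy hy

theorem one_half_le_Gamma {y : ℝ} (hy : 0 < y) : 1 / 2 ≤ Gamma y := by
  have h_one : ∀ z : ℝ, 1 ≤ z → 1 / 2 ≤ Gamma z := fun z hz => by
    rcases le_total 2 z with h2 | h2
    · linarith [one_le_Gamma h2]
    · have h := one_le_Gamma (y := z + 1) (by linarith)
      rw [Real.Gamma_add_one (by linarith)] at h
      nlinarith [Gamma_pos_of_pos (show 0 < z by linarith)]
  rcases le_total 1 y with h1 | h1
  · exact h_one y h1
  · calc 1 / 2 ≤ Gamma (y + 1) := h_one _ (by linarith)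
      _ = y * Gamma y := Real.Gamma_add_one hy.ne'
      _ ≤ Gamma y := mul_le_of_le_one_left (Gamma_pos_of_pos hy).le h1

/-- The Bessel–Clifford function of order `α` at `-y`, an entire function of `y` for which
`J_α(x) = (x / 2) ^ α * besselClifford α (x ^ 2 / 4)`. -/
noncomputable def besselClifford (α y : ℝ) : ℝ :=
  ∑' k : ℕ, (-1 : ℝ) ^ k / (k.factorial * Gamma (k + α + 1)) * y ^ k

section BesselClifford

variable {α : ℝ}

theorem abs_besselClifford_coeff_le (hα : -1 < α) (k : ℕ) :
    |(-1 : ℝ) ^ k / (k.factorial * Gamma (k + α + 1))| ≤ 2 / k.factorial := by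
  have hG := one_half_le_Gamma (y := k + α + 1) (by linarith [Nat.cast_nonneg (α := ℝ) k])
  have hk : (0 : ℝ) < k.factorial := by positivity
  rw [abs_div, abs_pow, abs_neg, abs_one, one_pow, abs_of_pos (by positivity),
    div_le_div_iff₀ (by positivity) hk]
  nlinarith

theorem summable_besselClifford (hα : -1 < α) (y : ℝ) :
    Summable fun k : ℕ => (-1 : ℝ) ^ k / (k.factorial * Gamma (k + α + 1)) * y ^ k := by
  refine Summable.of_norm_bounded ((Real.summable_pow_div_factorial |y|).mul_left 2) fun k => ?_
  rw [norm_mul, norm_pow, Real.norm_eq_abs, Real.norm_eq_abs]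
  exact (mul_le_mul_of_nonneg_right (abs_besselClifford_coeff_le hα k) (by positivity)).trans_eq
    (by ring)

theorem hasSum_besselClifford_deriv (hα : -1 < α) (y : ℝ) :
    HasSum (fun k : ℕ => (-1 : ℝ) ^ k / (k.factorial * Gamma (k + α + 1)) *
      (k * y ^ (k - 1))) (-besselClifford (α + 1) y) := by
  rw [← hasSum_nat_add_iff' 1]
  simp only [Finset.range_one, Finset.sum_singleton, Nat.cast_zero, zero_mul, mul_zero, sub_zero]
  refine ((summable_besselClifford (by linarith : -1 < α + 1) y).hasSum.neg).congr_fun fun k => ?_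
  rw [Nat.add_sub_cancel, Nat.factorial_succ]
  push_cast
  rw [show (k : ℝ) + 1 + α + 1 = k + (α + 1) + 1 by ring]
  field_simp
  ring

theorem hasDerivAt_besselClifford (hα : -1 < α) (y : ℝ) :
    HasDerivAt (besselClifford α) (-besselClifford (α + 1) y) y := by
  rw [← (hasSum_besselClifford_deriv hα y).tsum_eq]
  have hy : y ∈ Metric.ball (0 : ℝ) (|y| + 1) := by simp
  refine hasDerivAt_tsum_of_isPreconnected (t := Metric.ball (0 : ℝ) (|y| + 1))
    (u := fun k : ℕ => 2 / k.factorial * (k * (|y| + 1) ^ (k - 1))) ?_ Metric.isOpen_ball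
    (convex_ball _ _).isPreconnected (fun k z _ => (hasDerivAt_pow k z).const_mul _) ?_ hy
    (summable_besselClifford hα y) hy
  · rw [← summable_nat_add_iff 1]
    refine ((Real.summable_pow_div_factorial (|y| + 1)).mul_left 2).congr fun k => ?_
    rw [Nat.add_sub_cancel, Nat.factorial_succ]
    push_cast
    field_simp
  · intro k z hz
    rw [Metric.mem_ball, dist_zero_right, Real.norm_eq_abs] at hz
    rw [norm_mul, norm_mul, norm_pow, Real.norm_eq_abs, Real.norm_eq_abs z, Real.norm_natCast]
    gcongr
    exact abs_besselClifford_coeff_le hα k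

theorem besselClifford_eq_sub (hα : -1 < α) (y : ℝ) :
    besselClifford α y = (α + 1) * besselClifford (α + 1) y - y * besselClifford (α + 2) y := by
  have h1 := (summable_besselClifford (by linarith : -1 < α + 1) y).hasSum.mul_left (α + 1)
  have h2 := (hasSum_besselClifford_deriv (by linarith : -1 < α + 1) y).mul_left y
  have h := h1.add h2
  rw [show α + 1 + 1 = α + 2 by ring] at h
  rw [sub_eq_add_neg, ← mul_neg]
  refine Eq.trans (tsum_congr fun k => ?_) h.tsum_eq
  have hpos : 0 < (k : ℝ) + α + 1 := by linarith [Nat.cast_nonneg (α := ℝ) k]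
  have hG := Gamma_pos_of_pos hpos
  have hy : y * (k * y ^ (k - 1)) = k * y ^ k := by
    cases k with
    | zero => simp
    | succ n => rw [Nat.add_sub_cancel, pow_succ]; ring
  rw [show (k : ℝ) + (α + 1) + 1 = k + α + 1 + 1 by ring, Real.Gamma_add_one hpos.ne',
    mul_left_comm y, hy]
  generalize Gamma (k + α + 1) = G at *
  field_simp
  ring

end BesselClifford

section BesselJ

variable {α x : ℝ}

theorem besselJ_eq_rpow_mul_besselClifford (α : ℝ) (hx : 0 < x) :
    besselJ α x = (x / 2) ^ α * besselClifford α (x ^ 2 / 4) := by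
  rw [besselJ, besselClifford, ← tsum_mul_left]
  refine tsum_congr fun k => ?_
  rw [Real.rpow_add (by positivity), show 2 * (k : ℝ) = ((2 * k : ℕ) : ℝ) by push_cast; rfl,
    Real.rpow_natCast, pow_mul]
  ring

theorem hasDerivAt_besselJ (hα : -1 < α) (hx : 0 < x) :
    HasDerivAt (besselJ α) (α / x * besselJ α x - besselJ (α + 1) x) x := by
  have hpow : HasDerivAt (fun x : ℝ => (x / 2) ^ α) (1 / 2 * α * (x / 2) ^ (α - 1)) x :=
    ((hasDerivAt_id x).div_const 2).rpow_const (Or.inl (by simp [hx.ne']))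
  have hsq : HasDerivAt (fun x : ℝ => x ^ 2 / 4) (x / 2) x := by
    refine ((hasDerivAt_pow 2 x).div_const 4).congr_deriv ?_
    push_cast
    ring
  refine ((hpow.mul ((hasDerivAt_besselClifford hα (x ^ 2 / 4)).comp x hsq)).congr_of_eventuallyEq
    ?_).congr_deriv ?_
  · filter_upwards [lt_mem_nhds hx] with z hz using besselJ_eq_rpow_mul_besselClifford α hz
  · rw [besselJ_eq_rpow_mul_besselClifford α hx, besselJ_eq_rpow_mul_besselClifford (α + 1) hx,
      Real.rpow_sub (by positivity), Real.rpow_add (by positivity), Real.rpow_one]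
    simp only [Function.comp]
    field_simp
    ring

theorem besselJ_add_besselJ_add_two (hα : -1 < α) (hx : 0 < x) :
    besselJ α x + besselJ (α + 2) x = 2 * (α + 1) / x * besselJ (α + 1) x := by
  rw [besselJ_eq_rpow_mul_besselClifford α hx, besselJ_eq_rpow_mul_besselClifford (α + 1) hx,
    besselJ_eq_rpow_mul_besselClifford (α + 2) hx, besselClifford_eq_sub hα,
    Real.rpow_add (by positivity), Real.rpow_add (by positivity), Real.rpow_one, Real.rpow_two]
  field_simp
  ring

theorem tendsto_besselJ_nhdsGT_zero (hα : 0 < α) :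
    Tendsto (besselJ α) (𝓝[>] 0) (𝓝 0) := by
  have hC : Continuous (besselClifford α) := continuous_iff_continuousAt.mpr fun y =>
    (hasDerivAt_besselClifford (by linarith) y).continuousAt
  have hcont : Continuous fun x : ℝ => (x / 2) ^ α * besselClifford α (x ^ 2 / 4) :=
    (Continuous.rpow_const (by fun_prop) fun _ => Or.inr hα.le).mul (by fun_prop)
  refine ((hcont.tendsto' 0 0 ?_).mono_left nhdsWithin_le_nhds).congr' ?_
  · rw [zero_div, Real.zero_rpow hα.ne', zero_mul]
  · filter_upwards [self_mem_nhdsWithin] with x hx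
    exact (besselJ_eq_rpow_mul_besselClifford α hx).symm

end BesselJ

/-- The function `√x * J_α(x)`, which solves Bessel's equation in Liouville normal form. -/
noncomputable def sqrtMulBesselJ (α x : ℝ) : ℝ := √x * besselJ α x

section SqrtMulBesselJ

variable {α x : ℝ}

theorem sqrtMulBesselJ_add_add_two (hα : -1 < α) (hx : 0 < x) :
    sqrtMulBesselJ α x + sqrtMulBesselJ (α + 2) x =
      2 * (α + 1) / x * sqrtMulBesselJ (α + 1) x := by
  simp only [sqrtMulBesselJ]
  linear_combination √x * besselJ_add_besselJ_add_two hα hx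

theorem hasDerivAt_sqrtMulBesselJ (hα : -1 < α) (hx : 0 < x) :
    HasDerivAt (sqrtMulBesselJ α)
      ((α + 1 / 2) / x * sqrtMulBesselJ α x - sqrtMulBesselJ (α + 1) x) x := by
  refine ((Real.hasDerivAt_sqrt hx.ne').mul (hasDerivAt_besselJ hα hx)).congr_deriv ?_
  have hsqrt : 1 / (2 * √x) = √x / (2 * x) := by
    field_simp
    rw [Real.sq_sqrt hx.le]
  rw [hsqrt, sqrtMulBesselJ, sqrtMulBesselJ]
  field_simp
  ring

theorem hasDerivAt_sqrtMulBesselJ_add_one (hα : -1 < α) (hx : 0 < x) :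
    HasDerivAt (sqrtMulBesselJ (α + 1))
      (sqrtMulBesselJ α x - (α + 1 / 2) / x * sqrtMulBesselJ (α + 1) x) x := by
  refine (hasDerivAt_sqrtMulBesselJ (by linarith) hx).congr_deriv ?_
  rw [show α + 1 + 1 = α + 2 by ring]
  linear_combination -sqrtMulBesselJ_add_add_two hα hx

theorem isLiouvilleBesselSolution_sqrtMulBesselJ (hα : -1 < α) :
    IsLiouvilleBesselSolution (α ^ 2 - 1 / 4) (sqrtMulBesselJ α)
      fun x => (α + 1 / 2) / x * sqrtMulBesselJ α x - sqrtMulBesselJ (α + 1) x where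
  hasDerivAt _ hx := hasDerivAt_sqrtMulBesselJ hα hx
  hasDerivAt_deriv x hx := by
    refine ((((hasDerivAt_const x (α + 1 / 2)).div (hasDerivAt_id x) hx.ne').mul
      (hasDerivAt_sqrtMulBesselJ hα hx)).sub
        (hasDerivAt_sqrtMulBesselJ_add_one hα hx)).congr_deriv ?_
    simp only [Pi.div_apply, id]
    field_simp
    ring

theorem tendsto_sqrtMulBesselJ_nhdsGT_zero (hα : 0 < α) :
    Tendsto (sqrtMulBesselJ α) (𝓝[>] 0) (𝓝 0) := by
  have hsqrt : Tendsto Real.sqrt (𝓝[>] 0) (𝓝 0) :=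
    (Real.continuous_sqrt.tendsto' 0 0 Real.sqrt_zero).mono_left nhdsWithin_le_nhds
  have hmul := hsqrt.mul (tendsto_besselJ_nhdsGT_zero hα)
  rwa [mul_zero] at hmul

theorem tendsto_sqrtMulBesselJ_mul_deriv_nhdsGT_zero (hα : 0 < α) :
    Tendsto (fun x => sqrtMulBesselJ α x *
      ((α + 1 / 2) / x * sqrtMulBesselJ α x - sqrtMulBesselJ (α + 1) x)) (𝓝[>] 0) (𝓝 0) := by
  have hlim := (((tendsto_besselJ_nhdsGT_zero hα).pow 2).const_mul (α + 1 / 2)).sub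
    ((tendsto_sqrtMulBesselJ_nhdsGT_zero hα).mul
      (tendsto_sqrtMulBesselJ_nhdsGT_zero (show 0 < α + 1 by linarith)))
  rw [zero_pow two_ne_zero, mul_zero, mul_zero, sub_zero] at hlim
  refine hlim.congr' ?_
  filter_upwards [self_mem_nhdsWithin] with x (hx : 0 < x)
  simp only [sqrtMulBesselJ]
  field_simp
  rw [Real.sq_sqrt hx.le]
  ring

end SqrtMulBesselJ

/-! ### Asymptotics and the bound -/

theorem abs_sqrtMulBesselJ_le_rpow {α x : ℝ} (hα : 1 / 2 ≤ α) (hx : (α - 1 / 2) / 2 < x) :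
    |sqrtMulBesselJ α x| ≤ √(2 / π) * (x / (x - (α - 1 / 2) / 2)) ^ (α + 1 / 2) := by
  have hx0 : 0 < x := by linarith
  have hr : 0 < x - (α - 1 / 2) / 2 := sub_pos.mpr hx
  have : 0 < Gamma (α + 1 / 2) := Gamma_pos_of_pos (by linarith)
  have hI := abs_integral_one_sub_sq_rpow_mul_cos_le (by linarith : 0 ≤ α - 1 / 2) hx
  rw [show α - 1 / 2 + 1 = α + 1 / 2 by ring] at hI
  rw [sqrtMulBesselJ, besselJ_eq_poisson_integral (by linarith) hx0, abs_mul, abs_mul,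
    abs_of_nonneg (Real.sqrt_nonneg x), abs_of_pos (by positivity)]
  refine (mul_le_mul_of_nonneg_left (mul_le_mul_of_nonneg_left hI (by positivity))
    (by positivity)).trans_eq ?_
  have htwo : 2 * (2 : ℝ) ^ (α - 1 / 2) = √2 * 2 ^ α := by
    rw [Real.rpow_sub two_pos, ← Real.sqrt_eq_rpow, mul_div_left_comm, Real.div_sqrt, mul_comm]
  rw [Real.div_rpow hx0.le two_pos.le, Real.div_rpow one_pos.le hr.le, Real.one_rpow,
    Real.div_rpow hx0.le hr.le, Real.rpow_add hx0, ← Real.sqrt_eq_rpow, Real.sqrt_div two_pos.le]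
  generalize (x - (α - 1 / 2) / 2) ^ (α + 1 / 2) = D
  generalize (2 : ℝ) ^ (α - 1 / 2) = P at htwo
  field_simp
  linear_combination D⁻¹ * htwo

theorem eventually_abs_sqrtMulBesselJ_le_of_one_half_le {α B : ℝ} (hα : 1 / 2 ≤ α)
    (hB : √(2 / π) < B) : ∀ᶠ x in atTop, |sqrtMulBesselJ α x| ≤ B := by
  have hinv : Tendsto (fun x : ℝ => 1 - (α - 1 / 2) / 2 / x) atTop (𝓝 (1 - 0)) :=
    (tendsto_id.const_div_atTop _).const_sub 1
  rw [sub_zero] at hinv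
  have hratio : Tendsto (fun x : ℝ => √(2 / π) * (1 - (α - 1 / 2) / 2 / x)⁻¹ ^ (α + 1 / 2)) atTop
      (𝓝 (√(2 / π) * 1⁻¹ ^ (α + 1 / 2))) :=
    ((hinv.inv₀ one_ne_zero).rpow_const (Or.inl (by norm_num))).const_mul _
  rw [inv_one, Real.one_rpow, mul_one] at hratio
  filter_upwards [hratio.eventually_le_const hB, eventually_gt_atTop 0,
    eventually_gt_atTop ((α - 1 / 2) / 2)] with x hxB hx0 hx
  refine (abs_sqrtMulBesselJ_le_rpow hα hx).trans (le_of_eq_of_le ?_ hxB)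
  congr 2
  field_simp

theorem eventually_abs_sqrtMulBesselJ_le {α B : ℝ} (hα : -(1 / 2) ≤ α)
    (hB : √(2 / π) < B) : ∀ᶠ x in atTop, |sqrtMulBesselJ α x| ≤ B := by
  obtain ⟨C, hC, hCB⟩ := exists_between hB
  have hdecay : Tendsto (fun x : ℝ => 2 * (α + 1) / x * C + C) atTop (𝓝 (0 * C + C)) :=
    ((tendsto_id.const_div_atTop _).mul_const C).add_const C
  rw [zero_mul, zero_add] at hdecay
  filter_upwards [hdecay.eventually_le_const hCB, eventually_gt_atTop 0,
    eventually_abs_sqrtMulBesselJ_le_of_one_half_le (by linarith : 1 / 2 ≤ α + 1) hC,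
    eventually_abs_sqrtMulBesselJ_le_of_one_half_le (by linarith : 1 / 2 ≤ α + 2) hC]
    with x hxB hx h1 h2
  have hcoef : 0 ≤ 2 * (α + 1) / x := div_nonneg (by linarith) hx.le
  calc |sqrtMulBesselJ α x|
      = |2 * (α + 1) / x * sqrtMulBesselJ (α + 1) x - sqrtMulBesselJ (α + 2) x| := by
        rw [← sqrtMulBesselJ_add_add_two (by linarith) hx, add_sub_cancel_right]
    _ ≤ |2 * (α + 1) / x * sqrtMulBesselJ (α + 1) x| + |sqrtMulBesselJ (α + 2) x| := abs_sub _ _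
    _ ≤ 2 * (α + 1) / x * C + C := by
        rw [abs_mul, abs_of_nonneg hcoef]
        gcongr
    _ ≤ B := hxB

theorem sqrt_mul_sqrt_two_div_pi_mul {x : ℝ} (hx : 0 < x) : √x * √(2 / (π * x)) = √(2 / π) := by
  rw [← Real.sqrt_mul hx.le]
  congr 1
  field_simp

theorem sqrt_two_div_pi_le : √(2 / π) ≤ 4 / 5 := by
  rw [Real.sqrt_le_left (by norm_num), div_le_iff₀ pi_pos]
  linarith [pi_gt_d4]

theorem abs_besselJ_le_of_abs_le_one_half {α x : ℝ} (hα : |α| ≤ 1 / 2) (hx : 0 < x) :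
    |besselJ α x| ≤ √(2 / (π * x)) := by
  obtain ⟨hα1, hα2⟩ := abs_le.mp hα
  have hu := (isLiouvilleBesselSolution_sqrtMulBesselJ (by linarith : -1 < α)).abs_le_of_nonpos
    (by nlinarith) (Real.sqrt_nonneg (2 / π))
    (fun _ hB => eventually_abs_sqrtMulBesselJ_le hα1 hB) hx
  rw [sqrtMulBesselJ, abs_mul, abs_of_nonneg (Real.sqrt_nonneg x),
    ← sqrt_mul_sqrt_two_div_pi_mul hx] at hu
  exact le_of_mul_le_mul_left hu (Real.sqrt_pos.mpr hx)

theorem abs_besselJ_le_of_one_half_le {α x : ℝ} (hα : 1 / 2 ≤ α) (hx : 0 < x) :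
    |besselJ α x| ≤ √(2 / π) * (α ^ 2 - 1 / 4) + √(2 / (π * x)) := by
  have hm : 0 ≤ α ^ 2 - 1 / 4 := by nlinarith
  have hA : 0 ≤ √(2 / π) := Real.sqrt_nonneg _
  have h := isLiouvilleBesselSolution_sqrtMulBesselJ (by linarith : -1 < α)
  have hlim := fun B (hB : √(2 / π) < B) =>
    eventually_abs_sqrtMulBesselJ_le (by linarith : -(1 / 2) ≤ α) hB
  have hu : |sqrtMulBesselJ α x| ≤ √(2 / π) * (1 + (α ^ 2 - 1 / 4) * √x) := by
    refine abs_le_mul_one_add_mul_sqrt hA hm hx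
      (h.abs_le_mul_self hm hA hlim (tendsto_sqrtMulBesselJ_nhdsGT_zero (by linarith))
        (tendsto_sqrtMulBesselJ_mul_deriv_nhdsGT_zero (by linarith)) hx)
      ((le_add_of_nonneg_left (sq_nonneg _)).trans (h.sq_add_mul_sq_le hm hlim hx))
  rw [sqrtMulBesselJ, abs_mul, abs_of_nonneg (Real.sqrt_nonneg x)] at hu
  refine le_of_mul_le_mul_left (hu.trans_eq ?_) (Real.sqrt_pos.mpr hx)
  linear_combination -sqrt_mul_sqrt_two_div_pi_mul hx

theorem besselJ_bound_general {α x : ℝ} (hα : -(1 / 2) ≤ α) (hx : 0 < x) :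
    |besselJ α x| ≤ 4 / 5 * |α ^ 2 - 1 / 4| + √(2 / (π * x)) := by
  rcases le_total α (1 / 2) with h | h
  · exact (abs_besselJ_le_of_abs_le_one_half (abs_le.mpr ⟨hα, h⟩) hx).trans
      (le_add_of_nonneg_left (by positivity))
  · refine (abs_besselJ_le_of_one_half_le h hx).trans (add_le_add_left ?_ _)
    exact mul_le_mul sqrt_two_div_pi_le (le_abs_self _) (by nlinarith) (by norm_num)

theorem besselJ_bound (α : ℝ) (hα : -(1 / 2 : ℝ) ≤ α) (x : ℝ) (hx : 1 ≤ x) :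
    |besselJ α x| ≤ (4 / 5) * |α ^ 2 - 1 / 4| + Real.sqrt (2 / (π * x)) := by
  exact besselJ_bound_general hα (one_pos.trans_le hx)
end
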